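/- For every integer k ≥ 3 and every ε > 0 there exists n₀ such that every graph G on n ≥ n₀ vertices with minimum degree at least (1 - 1/(9k¹⁰))·(n-1) satisfies ν_{K_k}(G) ≥ (1-ε)·e(G)/C(k,2). (This expresses the bound c_{K_k} ≥ 1/(9k¹⁰).) -/

import Mathlib

/-- `c` is a copy of `H` in `G`, i.e. a subgraph of `G` isomorphic to `H`. -/
def SimpleGraph.Subgraph.IsCopy {α β : Type*} {G : SimpleGraph α} (c : G.Subgraph)
    (H : SimpleGraph β) : Prop :=
  Nonempty (c.coe ≃g H)

/-!
A `K_k`-packing of `G` is a matching in the hypergraph whose vertices are the edges of `G` and whose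
edges are the `k`-cliques of `G`. When the minimum degree is close to `n`, all edges of `G` lie in
nearly the same number of `k`-cliques, so a constant weight is almost a fractional decomposition of
`G` into `k`-cliques. The small deficit of each edge is repaired inside the `(k + 2)`-cliques
through it, by a signed weighting of their `k`-subsets that affects no other edge; the correction is
too small to make any weight negative. In the resulting exact fractional decomposition two edges
share cliques of total weight `O(1 / n)`.

Such a fractional perfect matching with small codegrees yields an almost perfect integral one. Pick
an edge of the hypergraph at random proportionally to its weight, delete everything it meets, and
repeat. To leading order the expected loss of the degree vector is its image under the codegree
matrix, whose eigenvalues are at least `-(r - 1)` when edges have `r` vertices. So in one step the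
squared deviation of the degrees from their typical value grows on average by a factor of at most
`1 + O(1 / N)`, plus an error proportional to the codegrees. Choosing an edge that does no worse
than average at every step keeps the deviation small until only an `ε` fraction of the `N` vertices
is left.
-/

section Packing

open Finset

section Preliminaries

lemma sum_sum_filter_mem_comm {β ι : Type*} [DecidableEq β] (T : Finset β) (I : Finset ι)
    (h : ι → Finset β) (F : β → ι → ℝ) :
    ∑ v ∈ T, ∑ i ∈ I with v ∈ h i, F v i = ∑ i ∈ I, ∑ v ∈ T ∩ h i, F v i :=
  sum_comm' fun v i => by simp only [mem_filter, mem_inter]; tauto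

lemma natCast_sub_min_one_le (n : ℕ) : (n : ℝ) - min (n : ℝ) 1 ≤ n * (n - 1) := by
  rcases n.eq_zero_or_pos with rfl | hn
  · simp
  · have hn : (1 : ℝ) ≤ n := by exact_mod_cast hn
    rw [min_eq_right hn]
    nlinarith

lemma natCast_mul_sub_one_nonneg (n : ℕ) : (0 : ℝ) ≤ n * (n - 1) :=
  (sub_nonneg.mpr (min_le_left _ _)).trans (natCast_sub_min_one_le n)

lemma sub_sub_sq_le {x l L q : ℝ} (hx : |x| ≤ 1) (hl : 0 ≤ l) (hlL : l ≤ L) (hq : 0 ≤ q) :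
    (x - (l - q)) ^ 2 ≤ x ^ 2 - 2 * (x * (L - q)) + L ^ 2 + q ^ 2 + 2 * (L - l) := by
  obtain ⟨_, hx1⟩ := abs_le.mp hx
  nlinarith [mul_nonneg (sub_nonneg.mpr hlL) (sub_nonneg.mpr hx1), mul_nonneg hl hq,
    mul_self_le_mul_self hl hlL]

lemma exists_le_of_sum_mul_le {ι : Type*} {I : Finset ι} {w g : ι → ℝ} {B : ℝ}
    (hw : ∀ i ∈ I, 0 ≤ w i) (hpos : 0 < ∑ i ∈ I, w i)
    (h : ∑ i ∈ I, w i * g i ≤ (∑ i ∈ I, w i) * B) : ∃ i ∈ I, g i ≤ B := by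
  by_contra! hlt
  obtain ⟨i, hi, hwi⟩ := exists_lt_of_sum_lt (f := fun _ => (0 : ℝ)) (by simpa using hpos)
  refine h.not_gt ?_
  rw [sum_mul]
  exact sum_lt_sum (fun j hj => mul_le_mul_of_nonneg_left (hlt j hj).le (hw j hj))
    ⟨i, hi, mul_lt_mul_of_pos_left (hlt i hi) hwi⟩

lemma exp_neg_two_mul_le {x : ℝ} (h0 : 0 ≤ x) (h1 : x ≤ 1 / 2) :
    Real.exp (-(2 * x)) ≤ 1 - x := by
  have hexp : 1 + 2 * x ≤ Real.exp (2 * x) := by linarith [Real.add_one_le_exp (2 * x)]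
  rw [Real.exp_neg]
  calc (Real.exp (2 * x))⁻¹ ≤ (1 + 2 * x)⁻¹ := inv_anti₀ (by linarith) hexp
    _ ≤ 1 - x := by
        rw [inv_le_iff_one_le_mul₀ (by linarith)]
        nlinarith

lemma mul_le_half_of_pow_five_mul_le_one {x y : ℝ} (hx : 2 ≤ x) (hxy : x ^ 5 * y ≤ 1) :
    x * y ≤ 1 / 2 := by
  have hpow : 2 ^ 4 ≤ x ^ 4 := by gcongr
  nlinarith

lemma subset_iff_card_inter_eq {α : Type*} [DecidableEq α] {s t : Finset α} :
    s ⊆ t ↔ #(s ∩ t) = #s :=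
  ⟨fun h => by rw [inter_eq_left.mpr h],
    fun h => inter_eq_left.mp (eq_of_subset_of_card_le inter_subset_left h.ge)⟩

lemma card_lt_card_union {α : Type*} [DecidableEq α] {e f : Finset α} (hef : e ≠ f) (h : #e = #f) :
    #e < #(e ∪ f) :=
  card_lt_card (subset_union_left.ssubset_of_ne fun heq =>
    hef (eq_of_subset_of_card_le (heq ▸ subset_union_right) h.le).symm)

lemma card_powersetCard_filter_superset {α : Type*} [DecidableEq α] {A Q : Finset α} (hA : A ⊆ Q)
    {k d : ℕ} (hQ : #Q = k + d) :
    #{K ∈ Q.powersetCard k | A ⊆ K} = (#Q - #A).choose d := by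
  rw [← card_sdiff_of_subset hA, ← card_powersetCard]
  refine card_nbij' (Q \ ·) (Q \ ·) ?_ ?_ ?_ ?_
  · intro K hK
    obtain ⟨hK, hAK⟩ := mem_filter.mp hK
    obtain ⟨hKQ, hcard⟩ := mem_powersetCard.mp hK
    refine mem_coe.mpr (mem_powersetCard.mpr ⟨sdiff_subset_sdiff subset_rfl hAK, ?_⟩)
    rw [card_sdiff_of_subset hKQ, hQ, hcard, Nat.add_sub_cancel_left]
  · intro P hP
    obtain ⟨hPQ, hcard⟩ := mem_powersetCard.mp (mem_coe.mp hP)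
    obtain ⟨hPQ, hPA⟩ := subset_sdiff.mp hPQ
    refine mem_coe.mpr (mem_filter.mpr ⟨mem_powersetCard.mpr ⟨sdiff_subset, ?_⟩,
      subset_sdiff.mpr ⟨hA, hPA.symm⟩⟩)
    rw [card_sdiff_of_subset hPQ, hQ, hcard, Nat.add_sub_cancel]
  · exact fun K hK =>
      Finset.sdiff_sdiff_eq_self (mem_powersetCard.mp (mem_filter.mp (mem_coe.mp hK)).1).1
  · exact fun P hP =>
      Finset.sdiff_sdiff_eq_self ((mem_powersetCard.mp (mem_coe.mp hP)).1.trans sdiff_subset)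

end Preliminaries

/-! ### The nibble for weighted hypergraphs -/

/-- A finite hypergraph with nonnegative edge weights. Edges are named by elements of `ι`, so that
deleting edges amounts to shrinking `index`. -/
structure WeightedHypergraph (β ι : Type*) where
  verts : Finset β
  index : Finset ι
  edge : ι → Finset β
  weight : ι → ℝ
  edge_subset : ∀ i ∈ index, edge i ⊆ verts
  weight_nonneg : ∀ i ∈ index, 0 ≤ weight i

namespace WeightedHypergraph

variable {β ι : Type*}

/-- Every edge has exactly `r` vertices. -/
def IsUniform (H : WeightedHypergraph β ι) (r : ℕ) : Prop :=
  ∀ i ∈ H.index, #(H.edge i) = r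

/-- The sum of all edge weights; it normalizes the weights to a probability distribution. -/
def totalWeight (H : WeightedHypergraph β ι) : ℝ :=
  ∑ i ∈ H.index, H.weight i

lemma totalWeight_nonneg {H : WeightedHypergraph β ι} : 0 ≤ H.totalWeight :=
  sum_nonneg H.weight_nonneg

section Degrees

variable [DecidableEq β] (H : WeightedHypergraph β ι)

/-- A matching, given as a set of indices of pairwise disjoint edges. -/
def IsMatching (M : Finset ι) : Prop :=
  M ⊆ H.index ∧ (M : Set ι).Pairwise fun i j => Disjoint (H.edge i) (H.edge j)

/-- The weighted degree of `v`. -/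
def degree (v : β) : ℝ :=
  ∑ i ∈ H.index with v ∈ H.edge i, H.weight i

/-- The weighted codegree of `v` and `u`, set to zero on the diagonal so that summing over `u` does
not pick up the degree of `v`. -/
def codegree (v u : β) : ℝ :=
  ∑ i ∈ H.index with u ≠ v ∧ v ∈ H.edge i ∧ u ∈ H.edge i, H.weight i

/-- Deletion of the vertices of the edge `f`, together with all edges meeting `f`: the step of the
greedy matching algorithm that selects `f`. -/
def delete (f : ι) : WeightedHypergraph β ι where
  verts := H.verts \ H.edge f
  index := {i ∈ H.index | Disjoint (H.edge i) (H.edge f)}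
  edge := H.edge
  weight := H.weight
  edge_subset i hi := subset_sdiff.mpr
    ⟨H.edge_subset i (mem_filter.mp hi).1, (mem_filter.mp hi).2⟩
  weight_nonneg i hi := H.weight_nonneg i (mem_filter.mp hi).1

/-- A linear proxy for the degree that `v` loses when `f` is selected: an edge through `v` counts
once for each vertex of `f` on it, instead of once in total. -/
def overlap (f : ι) (v : β) : ℝ :=
  ∑ u ∈ H.edge f, H.codegree v u

/-- The squared `ℓ²` distance of the degree sequence from the constant `p`. -/
def deviation (p : ℝ) : ℝ :=
  ∑ v ∈ H.verts, (H.degree v - p) ^ 2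

variable {H}

lemma degree_nonneg (v : β) : 0 ≤ H.degree v :=
  sum_nonneg fun i hi => H.weight_nonneg i (mem_filter.mp hi).1

lemma codegree_nonneg (v u : β) : 0 ≤ H.codegree v u :=
  sum_nonneg fun i hi => H.weight_nonneg i (mem_filter.mp hi).1

lemma overlap_nonneg (f : ι) (v : β) : 0 ≤ H.overlap f v :=
  sum_nonneg fun _ _ => codegree_nonneg _ _

lemma codegree_comm (v u : β) : H.codegree v u = H.codegree u v := by
  simp only [codegree, ne_comm, and_comm]

lemma degree_delete_le (f : ι) (v : β) : (H.delete f).degree v ≤ H.degree v :=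
  sum_le_sum_of_subset_of_nonneg (filter_subset_filter _ (filter_subset _ _))
    fun i hi _ => H.weight_nonneg i (mem_filter.mp hi).1

lemma codegree_delete_le (f : ι) (v u : β) : (H.delete f).codegree v u ≤ H.codegree v u :=
  sum_le_sum_of_subset_of_nonneg (filter_subset_filter _ (filter_subset _ _))
    fun i hi _ => H.weight_nonneg i (mem_filter.mp hi).1

lemma IsUniform.delete {r : ℕ} (hr : H.IsUniform r) (f : ι) : (H.delete f).IsUniform r :=
  fun i hi => hr i (mem_filter.mp hi).1

lemma card_verts_delete_add {r : ℕ} (hr : H.IsUniform r) {f : ι} (hf : f ∈ H.index) :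
    #(H.delete f).verts + r = #H.verts := by
  rw [← hr f hf]
  exact card_sdiff_add_card_eq_card (H.edge_subset f hf)

lemma IsMatching.exists_insert {r : ℕ} (hr : H.IsUniform r) (hr0 : 0 < r) {f : ι}
    (hf : f ∈ H.index) {M : Finset ι} (hM : (H.delete f).IsMatching M) :
    ∃ M', H.IsMatching M' ∧ #M' = #M + 1 := by
  classical
  have hdisj : ∀ i ∈ M, Disjoint (H.edge i) (H.edge f) := fun i hi => (mem_filter.mp (hM.1 hi)).2
  have hfM : f ∉ M := by
    intro hfM
    have hempty : H.edge f = ∅ := disjoint_self.mp (hdisj f hfM)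
    have hcard := hr f hf
    rw [hempty, card_empty] at hcard
    exact hr0.ne hcard
  refine ⟨insert f M, ⟨insert_subset hf (hM.1.trans (filter_subset _ _)), ?_⟩,
    card_insert_of_notMem hfM⟩
  rw [coe_insert]
  exact hM.2.insert fun i hi _ => ⟨(hdisj i hi).symm, hdisj i hi⟩

lemma sum_mul_degree (a : β → ℝ) :
    ∑ v ∈ H.verts, a v * H.degree v = ∑ i ∈ H.index, H.weight i * ∑ v ∈ H.edge i, a v := by
  simp_rw [degree, mul_sum, sum_sum_filter_mem_comm]
  refine sum_congr rfl fun i hi => ?_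
  simp_rw [inter_eq_right.mpr (H.edge_subset i hi), mul_comm]

lemma sum_degree {r : ℕ} (hr : H.IsUniform r) :
    ∑ v ∈ H.verts, H.degree v = r * H.totalWeight := by
  have h := H.sum_mul_degree fun _ => 1
  simp only [one_mul, sum_const, nsmul_eq_mul, mul_one] at h
  rw [h, totalWeight, mul_sum]
  exact sum_congr rfl fun i hi => by rw [hr i hi, mul_comm]

lemma sum_codegree (T : Finset β) (v : β) :
    ∑ u ∈ T, H.codegree v u =
      ∑ i ∈ H.index with v ∈ H.edge i, H.weight i * #((T ∩ H.edge i).erase v) := by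
  calc ∑ u ∈ T, H.codegree v u
      = ∑ i ∈ H.index with v ∈ H.edge i, ∑ _u ∈ (T ∩ H.edge i).erase v, H.weight i :=
        sum_comm' fun u i => by simp only [mem_filter, mem_erase, mem_inter]; tauto
    _ = _ := by simp only [sum_const, nsmul_eq_mul, mul_comm]

lemma sum_codegree_verts {r : ℕ} (hr : H.IsUniform r) (v : β) :
    ∑ u ∈ H.verts, H.codegree v u = (r - 1) * H.degree v := by
  rw [sum_codegree, degree, mul_sum]
  refine sum_congr rfl fun i hi => ?_
  obtain ⟨hi, hv⟩ := mem_filter.mp hi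
  rw [inter_eq_right.mpr (H.edge_subset i hi), cast_card_erase_of_mem hv, hr i hi, mul_comm]

lemma sum_sum_codegree (T : Finset β) :
    ∑ v ∈ T, ∑ u ∈ T, H.codegree v u =
      ∑ i ∈ H.index, H.weight i * (#(T ∩ H.edge i) * (#(T ∩ H.edge i) - 1)) := by
  simp_rw [sum_codegree, sum_sum_filter_mem_comm]
  refine sum_congr rfl fun i _ => ?_
  rw [sum_congr rfl fun v hv => by rw [cast_card_erase_of_mem hv], sum_const, nsmul_eq_mul]
  ring

lemma overlap_le {r : ℕ} (hr : H.IsUniform r) {α : ℝ} (hα : ∀ v u, H.codegree v u ≤ α) {f : ι}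
    (hf : f ∈ H.index) (v : β) : H.overlap f v ≤ r * α := by
  rw [← hr f hf, ← nsmul_eq_mul]
  exact sum_le_card_nsmul _ _ _ fun u _ => hα v u

lemma overlap_eq_of_notMem {f : ι} {v : β} (hv : v ∉ H.edge f) :
    H.overlap f v =
      ∑ i ∈ H.index with v ∈ H.edge i, H.weight i * #(H.edge f ∩ H.edge i) := by
  rw [overlap, sum_codegree]
  refine sum_congr rfl fun i _ => ?_
  rw [erase_eq_of_notMem fun h => hv (mem_inter.mp h).1]

lemma degree_sub_degree_delete (f : ι) (v : β) :
    H.degree v - (H.delete f).degree v =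
      ∑ i ∈ H.index with v ∈ H.edge i, H.weight i * min (#(H.edge f ∩ H.edge i) : ℝ) 1 := by
  have hdelete : (H.delete f).degree v =
      ∑ i ∈ H.index with v ∈ H.edge i,
        if Disjoint (H.edge i) (H.edge f) then H.weight i else 0 := by
    rw [← sum_filter, filter_comm]
    rfl
  rw [hdelete, degree, ← sum_sub_distrib]
  refine sum_congr rfl fun i _ => ?_
  split_ifs with hdisj
  · simp [disjoint_iff_inter_eq_empty.mp hdisj.symm]
  · have hpos : 1 ≤ #(H.edge f ∩ H.edge i) :=
      card_pos.mpr (not_disjoint_iff_nonempty_inter.mp fun h => hdisj h.symm)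
    rw [min_eq_right (by exact_mod_cast hpos), mul_one, sub_zero]

lemma degree_sub_degree_delete_le_overlap {f : ι} {v : β} (hv : v ∉ H.edge f) :
    H.degree v - (H.delete f).degree v ≤ H.overlap f v := by
  rw [degree_sub_degree_delete, overlap_eq_of_notMem hv]
  exact sum_le_sum fun i hi =>
    mul_le_mul_of_nonneg_left (min_le_left _ _) (H.weight_nonneg i (mem_filter.mp hi).1)

lemma sum_overlap_sub_degree_loss_le {r : ℕ} (hr : H.IsUniform r) {α : ℝ}
    (hα : ∀ v u, H.codegree v u ≤ α) {f : ι} (hf : f ∈ H.index) :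
    ∑ v ∈ H.verts \ H.edge f, (H.overlap f v - (H.degree v - (H.delete f).degree v)) ≤
      r ^ 3 * α := by
  set s : ι → ℝ := fun i => #(H.edge f ∩ H.edge i)
  have hexcess : ∀ i ∈ H.index, 0 ≤ H.weight i * (s i * (s i - 1)) := fun i hi =>
    mul_nonneg (H.weight_nonneg i hi) (natCast_mul_sub_one_nonneg _)
  calc ∑ v ∈ H.verts \ H.edge f, (H.overlap f v - (H.degree v - (H.delete f).degree v))
      ≤ ∑ v ∈ H.verts \ H.edge f,
          ∑ i ∈ H.index with v ∈ H.edge i, H.weight i * (s i * (s i - 1)) := by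
        refine sum_le_sum fun v hv => ?_
        rw [overlap_eq_of_notMem (mem_sdiff.mp hv).2, degree_sub_degree_delete,
          ← sum_sub_distrib]
        refine sum_le_sum fun i hi => ?_
        rw [← mul_sub]
        exact mul_le_mul_of_nonneg_left (natCast_sub_min_one_le _)
          (H.weight_nonneg i (mem_filter.mp hi).1)
    _ ≤ ∑ v ∈ H.verts, ∑ i ∈ H.index with v ∈ H.edge i, H.weight i * (s i * (s i - 1)) :=
        sum_le_sum_of_subset_of_nonneg sdiff_subset fun v _ _ =>
          sum_nonneg fun i hi => hexcess i (mem_filter.mp hi).1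
    _ = r * ∑ v ∈ H.edge f, ∑ u ∈ H.edge f, H.codegree v u := by
        rw [sum_sum_filter_mem_comm, sum_sum_codegree, mul_sum]
        refine sum_congr rfl fun i hi => ?_
        rw [inter_eq_right.mpr (H.edge_subset i hi), sum_const, hr i hi, nsmul_eq_mul]
    _ ≤ r * ∑ _v ∈ H.edge f, ∑ _u ∈ H.edge f, α := by
        gcongr
        exact hα _ _
    _ = r ^ 3 * α := by
        simp only [sum_const, hr f hf, nsmul_eq_mul]
        ring

end Degrees

section Deletion

variable [DecidableEq β] {H : WeightedHypergraph β ι} {r : ℕ} {α : ℝ}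

/-- The hypotheses on a weighted hypergraph that survive every deletion: uniformity, degrees at most
one, and codegrees at most `α`. -/
structure IsSparse (H : WeightedHypergraph β ι) (r : ℕ) (α : ℝ) : Prop where
  isUniform : H.IsUniform r
  degree_le_one : ∀ v, H.degree v ≤ 1
  codegree_le : ∀ v u, H.codegree v u ≤ α

lemma IsSparse.delete (hH : H.IsSparse r α) (f : ι) : (H.delete f).IsSparse r α where
  isUniform := hH.isUniform.delete f
  degree_le_one v := (degree_delete_le f v).trans (hH.degree_le_one v)
  codegree_le v u := (codegree_delete_le f v u).trans (hH.codegree_le v u)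

lemma sum_overlap_le (hH : H.IsSparse r α) (hr : 1 ≤ r) {f : ι} (hf : f ∈ H.index) :
    ∑ v ∈ H.verts, H.overlap f v ≤ r * (r - 1) := by
  have hr : (1 : ℝ) ≤ r := by exact_mod_cast hr
  calc ∑ v ∈ H.verts, H.overlap f v
      = ∑ u ∈ H.edge f, (r - 1) * H.degree u := by
        simp_rw [overlap]
        rw [sum_comm]
        refine sum_congr rfl fun u _ => ?_
        simp_rw [codegree_comm _ u]
        exact sum_codegree_verts hH.isUniform u
    _ ≤ ∑ _u ∈ H.edge f, ((r : ℝ) - 1) := sum_le_sum fun u _ =>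
        mul_le_of_le_one_right (sub_nonneg.mpr hr) (hH.degree_le_one u)
    _ = r * (r - 1) := by rw [sum_const, hH.isUniform f hf, nsmul_eq_mul]

lemma sum_overlap_sq_le (hH : H.IsSparse r α) (hr : 1 ≤ r) (hα : 0 ≤ α) {f : ι}
    (hf : f ∈ H.index) : ∑ v ∈ H.verts, H.overlap f v ^ 2 ≤ r ^ 3 * α := by
  calc ∑ v ∈ H.verts, H.overlap f v ^ 2
      ≤ ∑ v ∈ H.verts, r * α * H.overlap f v := by
        refine sum_le_sum fun v _ => ?_
        rw [sq]
        exact mul_le_mul_of_nonneg_right (overlap_le hH.isUniform hH.codegree_le hf v)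
          (overlap_nonneg f v)
    _ ≤ r * α * (r * (r - 1)) := by
        rw [← mul_sum]
        exact mul_le_mul_of_nonneg_left (sum_overlap_le hH hr hf) (by positivity)
    _ ≤ r * α * (r * r) := by gcongr; exact sub_le_self _ zero_le_one
    _ = r ^ 3 * α := by ring

lemma deviation_delete_le (hH : H.IsSparse r α) (hr : 1 ≤ r) (hα : 0 ≤ α) {f : ι}
    (hf : f ∈ H.index) {p q : ℝ} (hp0 : 0 ≤ p) (hp1 : p ≤ 1) (hq : 0 ≤ q) :
    (H.delete f).deviation (p - q) ≤
      H.deviation p - 2 * ∑ v ∈ H.verts, (H.degree v - p) * (H.overlap f v - q)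
        + #H.verts * q ^ 2 + 3 * r ^ 3 * α := by
  set x : β → ℝ := fun v => H.degree v - p
  set L : β → ℝ := H.overlap f
  set l : β → ℝ := fun v => H.degree v - (H.delete f).degree v
  have hterm : ∀ v ∈ H.verts \ H.edge f, ((H.delete f).degree v - (p - q)) ^ 2 ≤
      x v ^ 2 - 2 * (x v * (L v - q)) + L v ^ 2 + q ^ 2 + 2 * (L v - l v) := by
    intro v hv
    have hx : |x v| ≤ 1 := abs_le.mpr
      ⟨by linarith [degree_nonneg (H := H) v], by linarith [hH.degree_le_one v]⟩
    have h := sub_sub_sq_le hx (sub_nonneg.mpr (degree_delete_le f v))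
      (degree_sub_degree_delete_le_overlap (mem_sdiff.mp hv).2) hq
    convert h using 2
    ring
  have hedge : ∀ v, 0 ≤ x v ^ 2 - 2 * (x v * (L v - q)) + L v ^ 2 + q ^ 2 := fun v => by
    nlinarith [sq_nonneg (x v - (L v - q)), mul_nonneg (overlap_nonneg (H := H) f v) hq]
  calc (H.delete f).deviation (p - q)
      ≤ ∑ v ∈ H.verts \ H.edge f,
          (x v ^ 2 - 2 * (x v * (L v - q)) + L v ^ 2 + q ^ 2 + 2 * (L v - l v)) :=
        sum_le_sum hterm
    _ = ∑ v ∈ H.verts \ H.edge f, (x v ^ 2 - 2 * (x v * (L v - q)) + L v ^ 2 + q ^ 2)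
          + 2 * ∑ v ∈ H.verts \ H.edge f, (L v - l v) := by rw [sum_add_distrib, mul_sum]
    _ ≤ ∑ v ∈ H.verts, (x v ^ 2 - 2 * (x v * (L v - q)) + L v ^ 2 + q ^ 2)
          + 2 * (r ^ 3 * α) := by
        gcongr
        · exact fun v _ _ => hedge v
        · exact sdiff_subset
        · exact sum_overlap_sub_degree_loss_le hH.isUniform hH.codegree_le hf
    _ = H.deviation p - 2 * ∑ v ∈ H.verts, x v * (L v - q) + ∑ v ∈ H.verts, L v ^ 2
          + #H.verts * q ^ 2 + 2 * (r ^ 3 * α) := by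
        simp only [sum_add_distrib, sum_sub_distrib, sum_const, nsmul_eq_mul, mul_sum, deviation, x]
    _ ≤ _ := by linarith [sum_overlap_sq_le hH hr hα hf]

lemma neg_sum_codegree_mul_mul_le (hH : H.IsSparse r α) (hr : 1 ≤ r) (x : β → ℝ) :
    -∑ v ∈ H.verts, x v * ∑ u ∈ H.verts, H.codegree v u * x u ≤
      (r - 1) * ∑ v ∈ H.verts, x v ^ 2 := by
  have hr : (0 : ℝ) ≤ r - 1 := sub_nonneg.mpr (by exact_mod_cast hr)
  have hdiag : ∑ v ∈ H.verts, ∑ u ∈ H.verts, H.codegree v u * x v ^ 2 ≤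
      (r - 1) * ∑ v ∈ H.verts, x v ^ 2 := by
    rw [mul_sum]
    refine sum_le_sum fun v _ => ?_
    rw [← sum_mul, sum_codegree_verts hH.isUniform]
    gcongr
    exact mul_le_of_le_one_right hr (hH.degree_le_one v)
  have hsymm : ∑ v ∈ H.verts, ∑ u ∈ H.verts, H.codegree v u * x u ^ 2 =
      ∑ v ∈ H.verts, ∑ u ∈ H.verts, H.codegree v u * x v ^ 2 := by
    rw [sum_comm]
    simp_rw [codegree_comm]
  calc -∑ v ∈ H.verts, x v * ∑ u ∈ H.verts, H.codegree v u * x u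
      ≤ ∑ v ∈ H.verts, ∑ u ∈ H.verts,
          (H.codegree v u * x v ^ 2 + H.codegree v u * x u ^ 2) / 2 := by
        simp_rw [mul_sum, ← sum_neg_distrib]
        refine sum_le_sum fun v _ => sum_le_sum fun u _ => ?_
        nlinarith [mul_nonneg (codegree_nonneg (H := H) v u) (sq_nonneg (x v + x u))]
    _ = ∑ v ∈ H.verts, ∑ u ∈ H.verts, H.codegree v u * x v ^ 2 := by
        simp_rw [← sum_div, sum_add_distrib]
        rw [hsymm, add_self_div_two]
    _ ≤ _ := hdiag

lemma sum_weight_mul_sum_overlap (hr : H.IsUniform r) (p q : ℝ) :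
    ∑ f ∈ H.index, H.weight f * ∑ v ∈ H.verts, (H.degree v - p) * (H.overlap f v - q) =
      ∑ v ∈ H.verts, (H.degree v - p) * ∑ u ∈ H.verts, H.codegree v u * (H.degree u - p)
        + (r - 1) * p * H.deviation p
        + ((r - 1) * p ^ 2 - q * H.totalWeight) * ∑ v ∈ H.verts, (H.degree v - p) := by
  have hoverlap : ∀ v, ∑ f ∈ H.index, H.weight f * H.overlap f v =
      ∑ u ∈ H.verts, H.codegree v u * (H.degree u - p) + (r - 1) * p * H.degree v := by
    intro v
    calc ∑ f ∈ H.index, H.weight f * H.overlap f v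
        = ∑ u ∈ H.verts, H.codegree v u * H.degree u := (sum_mul_degree _).symm
      _ = ∑ u ∈ H.verts, H.codegree v u * (H.degree u - p)
            + p * ∑ u ∈ H.verts, H.codegree v u := by
          rw [mul_sum, ← sum_add_distrib]
          exact sum_congr rfl fun u _ => by ring
      _ = _ := by rw [sum_codegree_verts hr]; ring
  calc ∑ f ∈ H.index, H.weight f * ∑ v ∈ H.verts, (H.degree v - p) * (H.overlap f v - q)
      = ∑ v ∈ H.verts, (H.degree v - p) *
          (∑ f ∈ H.index, H.weight f * H.overlap f v - q * H.totalWeight) := by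
        simp_rw [totalWeight, mul_sum, ← sum_sub_distrib, mul_sum]
        rw [sum_comm]
        exact sum_congr rfl fun v _ => sum_congr rfl fun f _ => by ring
    _ = _ := by
        rw [deviation, mul_sum, mul_sum, ← sum_add_distrib, ← sum_add_distrib]
        exact sum_congr rfl fun v _ => by rw [hoverlap]; ring

lemma sum_degree_sub (hr : H.IsUniform r) (p : ℝ) :
    ∑ v ∈ H.verts, (H.degree v - p) = r * H.totalWeight - #H.verts * p := by
  rw [sum_sub_distrib, sum_degree hr, sum_const, nsmul_eq_mul]

lemma neg_sum_weight_mul_sum_overlap_le (hH : H.IsSparse r α) (hr : 1 ≤ r) {p : ℝ} (hp : 0 ≤ p) :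
    -∑ f ∈ H.index, H.weight f * ∑ v ∈ H.verts,
        (H.degree v - p) * (H.overlap f v - p * (r * (r - 1) / #H.verts)) ≤
      (r - 1) * H.deviation p := by
  rcases H.verts.eq_empty_or_nonempty with hverts | hverts
  · simp [deviation, hverts]
  have hm : (0 : ℝ) < #H.verts := by exact_mod_cast hverts.card_pos
  have hr : (0 : ℝ) ≤ r - 1 := sub_nonneg.mpr (by exact_mod_cast hr)
  have hquad := neg_sum_codegree_mul_mul_le hH ‹_› fun v => H.degree v - p
  set X := ∑ v ∈ H.verts, (H.degree v - p) with hX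
  have hcoeff : (r - 1) * p ^ 2 - p * (r * (r - 1) / #H.verts) * H.totalWeight =
      -((r - 1) * p * (X / #H.verts)) := by
    rw [hX, sum_degree_sub hH.isUniform]
    field_simp
    ring
  have hmean : X / #H.verts * X ≤ H.deviation p := by
    rw [div_mul_eq_mul_div, div_le_iff₀' hm, ← sq]
    exact sq_sum_le_card_mul_sum_sq
  rw [sum_weight_mul_sum_overlap hH.isUniform, hcoeff]
  rw [← deviation] at hquad
  linarith [mul_le_mul_of_nonneg_left hmean (mul_nonneg hr hp)]

lemma exists_deviation_delete_le (hH : H.IsSparse r α) (hr : 1 ≤ r) (hα : 0 ≤ α) {p : ℝ}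
    (hp0 : 0 ≤ p) (hp1 : p ≤ 1) (hW : 0 < H.totalWeight) :
    ∃ f ∈ H.index, (H.delete f).deviation (p * (1 - r * (r - 1) / #H.verts)) ≤
      H.deviation p * (1 + 2 * (r - 1) / H.totalWeight)
        + 3 * r ^ 3 * α + (r * (r - 1)) ^ 2 / #H.verts := by
  have hr' : (0 : ℝ) ≤ r - 1 := sub_nonneg.mpr (by exact_mod_cast hr)
  set m : ℝ := (#H.verts : ℝ)
  set q : ℝ := p * (r * (r - 1) / m) with hq
  obtain ⟨f, hf, hdrift⟩ : ∃ f ∈ H.index,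
      -∑ v ∈ H.verts, (H.degree v - p) * (H.overlap f v - q) ≤
        (r - 1) * H.deviation p / H.totalWeight := by
    refine exists_le_of_sum_mul_le H.weight_nonneg hW ?_
    rw [← totalWeight, mul_div_cancel₀ _ hW.ne']
    simp_rw [mul_neg, sum_neg_distrib]
    exact neg_sum_weight_mul_sum_overlap_le hH hr hp0
  have hmq : m * q ^ 2 ≤ (r * (r - 1)) ^ 2 / m := by
    calc m * q ^ 2 = p ^ 2 * ((r * (r - 1)) ^ 2 / m) := by
          rcases eq_or_ne m 0 with h0 | h0
          · simp [h0]
          · rw [hq]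
            field_simp
      _ ≤ (r * (r - 1)) ^ 2 / m :=
          mul_le_of_le_one_left (by positivity) (pow_le_one₀ hp0 hp1)
  have hq0 : 0 ≤ q := by positivity
  refine ⟨f, hf, ?_⟩
  calc (H.delete f).deviation (p * (1 - r * (r - 1) / m))
      = (H.delete f).deviation (p - q) := by rw [mul_one_sub]
    _ ≤ _ := deviation_delete_le hH hr hα hf hp0 hp1 hq0
    _ ≤ H.deviation p + 2 * ((r - 1) * H.deviation p / H.totalWeight)
          + (r * (r - 1)) ^ 2 / m + 3 * r ^ 3 * α := by linarith
    _ = _ := by ring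

lemma le_totalWeight (hr : H.IsUniform r) {p : ℝ} (hp : 0 ≤ p)
    (hdev : H.deviation p ≤ #H.verts * p ^ 2 / 4) : #H.verts * p / 2 ≤ r * H.totalWeight := by
  have hsq : (∑ v ∈ H.verts, (H.degree v - p)) ^ 2 ≤ (#H.verts * p / 2) ^ 2 :=
    calc (∑ v ∈ H.verts, (H.degree v - p)) ^ 2 ≤ #H.verts * H.deviation p :=
          sq_sum_le_card_mul_sum_sq
      _ ≤ #H.verts * (#H.verts * p ^ 2 / 4) := by gcongr
      _ = (#H.verts * p / 2) ^ 2 := by ring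
  have hlow := (abs_le_of_sq_le_sq' hsq (by positivity)).1
  rw [sum_degree_sub hr] at hlow
  linarith

end Deletion

section Nibble

variable [DecidableEq β] {H : WeightedHypergraph β ι} {r : ℕ} {ε : ℝ}

/-- As long as an `ε` fraction of the `N` initial vertices is left, one step of the nibble decreases
the typical degree by a factor at least `1 - nibbleRate r ε / N`. -/
noncomputable def nibbleRate (r : ℕ) (ε : ℝ) : ℝ := r ^ 2 / ε

/-- A lower bound for the typical degree throughout the nibble. -/
noncomputable def nibbleFloor (r : ℕ) (ε : ℝ) : ℝ := Real.exp (-(2 * nibbleRate r ε))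

/-- One step of the nibble multiplies the deviation by at most `exp (nibbleGrowth r ε / N)`, up to
an additive error. -/
noncomputable def nibbleGrowth (r : ℕ) (ε : ℝ) : ℝ := 4 * nibbleRate r ε / nibbleFloor r ε

/-- The additive error in the deviation allowed at each step of the nibble, chosen so that after `N`
steps the deviation is still at most `ε * N * nibbleFloor r ε ^ 2 / 4`. -/
noncomputable def nibbleError (r : ℕ) (ε : ℝ) : ℝ :=
  ε * nibbleFloor r ε ^ 2 / 4 * Real.exp (-nibbleGrowth r ε)

/-- The codegrees up to which the nibble covers a `1 - ε` fraction of the vertices. -/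
noncomputable def nibbleTolerance (r : ℕ) (ε : ℝ) : ℝ :=
  min (ε / (2 * r)) (nibbleError r ε / ((3 + 1 / ε) * r ^ 3))

/-- The state of the nibble after `t` steps on an `r`-uniform hypergraph with `N` vertices: the
degrees are concentrated in mean square around the typical degree `p`. -/
structure NibbleInvariant (H : WeightedHypergraph β ι) (r : ℕ) (ε : ℝ) (N t : ℕ) (p : ℝ) :
    Prop where
  isSparse : H.IsSparse r (nibbleTolerance r ε)
  card_verts : #H.verts + r * t = N
  le_density : Real.exp (-(2 * nibbleRate r ε) * (t / N)) ≤ p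
  density_le_one : p ≤ 1
  deviation_le : H.deviation p ≤ t * nibbleError r ε * Real.exp (nibbleGrowth r ε * (t / N))

lemma nibbleFloor_pos : 0 < nibbleFloor r ε := Real.exp_pos _

lemma nibbleRate_nonneg (hε : 0 < ε) : 0 ≤ nibbleRate r ε := by
  rw [nibbleRate]
  positivity

lemma nibbleGrowth_nonneg (hε : 0 < ε) : 0 ≤ nibbleGrowth r ε :=
  div_nonneg (mul_nonneg zero_le_four (nibbleRate_nonneg hε)) nibbleFloor_pos.le

lemma nibbleError_pos (hε : 0 < ε) : 0 < nibbleError r ε := by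
  have := nibbleFloor_pos (r := r) (ε := ε)
  rw [nibbleError]
  positivity

lemma nibbleTolerance_pos (hr : 1 ≤ r) (hε : 0 < ε) : 0 < nibbleTolerance r ε := by
  have := nibbleError_pos (r := r) hε
  refine lt_min ?_ ?_ <;> positivity

lemma mul_nibbleTolerance_div_le (hr : 1 ≤ r) (hε : 0 < ε) :
    r * nibbleTolerance r ε / ε ≤ 1 / 2 := by
  have h : nibbleTolerance r ε ≤ ε / (2 * r) := min_le_left _ _
  rw [le_div_iff₀ (by positivity)] at h
  rw [div_le_iff₀ hε]
  linarith

lemma nibbleTolerance_error_le (hr : 1 ≤ r) (hε : 0 < ε) :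
    3 * r ^ 3 * nibbleTolerance r ε + r ^ 3 * nibbleTolerance r ε / ε ≤ nibbleError r ε := by
  have h : nibbleTolerance r ε ≤ nibbleError r ε / ((3 + 1 / ε) * r ^ 3) := min_le_right _ _
  rw [le_div_iff₀ (by positivity)] at h
  calc 3 * r ^ 3 * nibbleTolerance r ε + r ^ 3 * nibbleTolerance r ε / ε
      = nibbleTolerance r ε * ((3 + 1 / ε) * r ^ 3) := by ring
    _ ≤ _ := h

lemma drift_le_rate (hr : 1 ≤ r) (hε : 0 < ε) {N : ℕ} (hN : 0 < N) {m : ℝ} (hm : ε * N ≤ m) :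
    r * (r - 1) / m ≤ nibbleRate r ε / N := by
  calc (r * (r - 1) / m : ℝ) ≤ r * r / (ε * N) := by
        gcongr
        exact sub_le_self _ zero_le_one
    _ = nibbleRate r ε / N := by
        rw [nibbleRate]
        field_simp

lemma drift_le_tolerance (hr : 1 ≤ r) (hε : 0 < ε) {N : ℕ} (hN : 0 < N) {m : ℝ} (hm : ε * N ≤ m)
    (hrN : r - 1 ≤ nibbleTolerance r ε * N) :
    r * (r - 1) / m ≤ r * nibbleTolerance r ε / ε := by
  have hτ := nibbleTolerance_pos hr hε
  calc (r * (r - 1) / m : ℝ) ≤ r * (nibbleTolerance r ε * N) / (ε * N) := by gcongr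
    _ = r * nibbleTolerance r ε / ε := by
        field_simp

namespace NibbleInvariant

variable {N t : ℕ} {p : ℝ}

lemma card_verts_eq (h : NibbleInvariant H r ε N t p) : (#H.verts : ℝ) = N - r * t := by
  rw [← h.card_verts]
  push_cast
  ring

lemma step_le (hr : 1 ≤ r) (h : NibbleInvariant H r ε N t p) : t ≤ N := by
  nlinarith [h.card_verts]

lemma nibbleFloor_le (hr : 1 ≤ r) (hε : 0 < ε) (h : NibbleInvariant H r ε N t p) :
    nibbleFloor r ε ≤ p := by
  refine le_trans (Real.exp_le_exp.mpr ?_) h.le_density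
  rw [neg_mul, neg_le_neg_iff]
  exact mul_le_of_le_one_right (mul_nonneg zero_le_two (nibbleRate_nonneg hε))
    (div_le_one_of_le₀ (Nat.cast_le.mpr (h.step_le hr)) N.cast_nonneg)

lemma deviation_le_sq (hr : 1 ≤ r) (hε : 0 < ε) (h : NibbleInvariant H r ε N t p)
    (hm : ε * N ≤ #H.verts) : H.deviation p ≤ #H.verts * p ^ 2 / 4 := by
  have hK := nibbleGrowth_nonneg (r := r) hε
  have hfloor := h.nibbleFloor_le hr hε
  calc H.deviation p
      ≤ t * nibbleError r ε * Real.exp (nibbleGrowth r ε * (t / N)) := h.deviation_le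
    _ ≤ N * nibbleError r ε * Real.exp (nibbleGrowth r ε) := by
        have := nibbleError_pos (r := r) hε
        gcongr
        · exact h.step_le hr
        · exact mul_le_of_le_one_right hK
            (div_le_one_of_le₀ (Nat.cast_le.mpr (h.step_le hr)) N.cast_nonneg)
    _ = ε * N * nibbleFloor r ε ^ 2 / 4 := by
        rw [nibbleError, Real.exp_neg]
        field_simp
    _ ≤ #H.verts * p ^ 2 / 4 := by
        have := nibbleFloor_pos (r := r) (ε := ε)
        gcongr

lemma le_totalWeight (hr : 1 ≤ r) (hε : 0 < ε) (h : NibbleInvariant H r ε N t p)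
    (hm : ε * N ≤ #H.verts) : ε * N * nibbleFloor r ε / (2 * r) ≤ H.totalWeight := by
  have hfloor := h.nibbleFloor_le hr hε
  have hp : 0 ≤ p := nibbleFloor_pos.le.trans hfloor
  have hW := WeightedHypergraph.le_totalWeight h.isSparse.isUniform hp (h.deviation_le_sq hr hε hm)
  have hmp : ε * N * nibbleFloor r ε ≤ #H.verts * p :=
    mul_le_mul hm hfloor nibbleFloor_pos.le (Nat.cast_nonneg _)
  rw [div_le_iff₀ (by positivity)]
  linarith

lemma growth_le (hr : 1 ≤ r) (hε : 0 < ε) (h : NibbleInvariant H r ε N t p) (hN : 0 < N)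
    (hm : ε * N ≤ #H.verts) :
    1 + 2 * (r - 1) / H.totalWeight ≤ Real.exp (nibbleGrowth r ε / N) := by
  have hfloor := nibbleFloor_pos (r := r) (ε := ε)
  calc 1 + 2 * (r - 1) / H.totalWeight
      ≤ 1 + 2 * r / (ε * N * nibbleFloor r ε / (2 * r)) := by
        gcongr
        · exact sub_le_self _ zero_le_one
        · exact h.le_totalWeight hr hε hm
    _ = nibbleGrowth r ε / N + 1 := by
        rw [nibbleGrowth, nibbleRate]
        field_simp
        ring
    _ ≤ _ := Real.add_one_le_exp _

lemma deviation_succ_le (hr : 1 ≤ r) (hε : 0 < ε) (h : NibbleInvariant H r ε N t p) (hN : 0 < N)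
    (hm : ε * N ≤ #H.verts) (hrN : r - 1 ≤ nibbleTolerance r ε * N) :
    H.deviation p * (1 + 2 * (r - 1) / H.totalWeight)
        + 3 * r ^ 3 * nibbleTolerance r ε + (r * (r - 1)) ^ 2 / #H.verts ≤
      (t + 1 : ℕ) * nibbleError r ε * Real.exp (nibbleGrowth r ε * ((t + 1 : ℕ) / N)) := by
  have hr1 : (0 : ℝ) ≤ r - 1 := sub_nonneg.mpr (by exact_mod_cast hr)
  have hW := H.totalWeight_nonneg
  have hb := nibbleError_pos (r := r) hε
  have hK := nibbleGrowth_nonneg (r := r) hε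
  set E := Real.exp (nibbleGrowth r ε * ((t + 1 : ℕ) / N)) with hE
  have hE1 : 1 ≤ E := Real.one_le_exp (by positivity)
  have hold : H.deviation p * (1 + 2 * (r - 1) / H.totalWeight) ≤ t * nibbleError r ε * E := by
    calc H.deviation p * (1 + 2 * (r - 1) / H.totalWeight)
        ≤ t * nibbleError r ε * Real.exp (nibbleGrowth r ε * (t / N))
            * Real.exp (nibbleGrowth r ε / N) :=
          mul_le_mul_of_nonneg' h.deviation_le (h.growth_le hr hε hN hm) (by positivity)
            (by positivity)
      _ = t * nibbleError r ε * E := by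
          rw [mul_assoc, ← Real.exp_add, hE]
          push_cast
          ring_nf
  have hdrift : (r * (r - 1)) ^ 2 / #H.verts ≤ r ^ 3 * nibbleTolerance r ε / ε := by
    calc ((r * (r - 1)) ^ 2 / #H.verts : ℝ) = r * (r - 1) * (r * (r - 1) / #H.verts) := by ring
      _ ≤ r * r * (r * nibbleTolerance r ε / ε) :=
          mul_le_mul_of_nonneg' (mul_le_mul_of_nonneg_left (sub_le_self _ zero_le_one)
            r.cast_nonneg) (drift_le_tolerance hr hε hN hm hrN) (by positivity) (by positivity)
      _ = r ^ 3 * nibbleTolerance r ε / ε := by ring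
  have hnew : nibbleError r ε ≤ nibbleError r ε * E := le_mul_of_one_le_right hb.le hE1
  push_cast
  linarith [nibbleTolerance_error_le hr hε]

lemma exists_delete (hr : 1 ≤ r) (hε : 0 < ε) (h : NibbleInvariant H r ε N t p)
    (hrN : r - 1 ≤ nibbleTolerance r ε * N) (ht : r * t < (1 - ε) * N) :
    ∃ f ∈ H.index, ∃ p', NibbleInvariant (H.delete f) r ε N (t + 1) p' := by
  have hr1 : (0 : ℝ) ≤ r - 1 := sub_nonneg.mpr (by exact_mod_cast hr)
  have hN : 0 < N := by
    rcases N.eq_zero_or_pos with rfl | hN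
    · exact absurd ht (by rw [Nat.cast_zero, mul_zero]; exact not_lt.mpr (by positivity))
    · exact hN
  have hfloor := nibbleFloor_pos (r := r) (ε := ε)
  have hp : 0 ≤ p := nibbleFloor_pos.le.trans (h.nibbleFloor_le hr hε)
  have hm : ε * N ≤ #H.verts := by linarith [h.card_verts_eq]
  have hW : 0 < H.totalWeight := lt_of_lt_of_le (by positivity) (h.le_totalWeight hr hε hm)
  have hτ := nibbleTolerance_pos hr hε
  obtain ⟨f, hf, hdev⟩ := exists_deviation_delete_le h.isSparse hr hτ.le hp h.density_le_one hW
  set x : ℝ := r * (r - 1) / #H.verts with hx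
  have hx0 : 0 ≤ x := by positivity
  have hxτ : x ≤ r * nibbleTolerance r ε / ε := drift_le_tolerance hr hε hN hm hrN
  have hxrate : x ≤ nibbleRate r ε / N := drift_le_rate hr hε hN hm
  refine ⟨f, hf, p * (1 - x), h.isSparse.delete f, ?_, ?_, ?_, ?_⟩
  · have := card_verts_delete_add h.isSparse.isUniform hf
    have := h.card_verts
    rw [Nat.mul_succ]
    omega
  · calc Real.exp (-(2 * nibbleRate r ε) * ((t + 1 : ℕ) / N))
        = Real.exp (-(2 * nibbleRate r ε) * (t / N))
            * Real.exp (-(2 * (nibbleRate r ε / N))) := by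
          rw [← Real.exp_add]
          push_cast
          ring_nf
      _ ≤ p * (1 - x) := by
          refine mul_le_mul h.le_density ?_ (Real.exp_pos _).le hp
          exact (Real.exp_le_exp.mpr (by linarith)).trans
            (exp_neg_two_mul_le hx0 (hxτ.trans (mul_nibbleTolerance_div_le hr hε)))
  · exact (mul_le_of_le_one_right hp (sub_le_self _ hx0)).trans h.density_le_one
  · exact hdev.trans (h.deviation_succ_le hr hε hN hm hrN)

end NibbleInvariant

lemma NibbleInvariant.exists_isMatching (hr : 1 ≤ r) (hε : 0 < ε) {N : ℕ}
    (hrN : r - 1 ≤ nibbleTolerance r ε * N) {T : ℕ} (hT : ∀ t < T, r * t < (1 - ε) * N) (s : ℕ) :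
    ∀ {H : WeightedHypergraph β ι} {t : ℕ} {p : ℝ}, t + s = T → NibbleInvariant H r ε N t p →
      ∃ M, H.IsMatching M ∧ #M = s := by
  induction s with
  | zero => exact fun _ _ => ⟨∅, ⟨empty_subset _, by simp⟩, card_empty⟩
  | succ s ih =>
    intro H t p hts h
    obtain ⟨f, hf, p', h'⟩ := h.exists_delete hr hε hrN (hT t (by omega))
    obtain ⟨M, hM, hcard⟩ := ih (by omega) h'
    obtain ⟨M', hM', hcard'⟩ := hM.exists_insert h.isSparse.isUniform hr hf
    exact ⟨M', hM', by rw [hcard', hcard]⟩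

lemma degree_eq_zero_of_notMem {v : β} (hv : v ∉ H.verts) : H.degree v = 0 :=
  sum_eq_zero fun i hi => absurd (H.edge_subset i (mem_filter.mp hi).1 (mem_filter.mp hi).2) hv

lemma nibbleInvariant_zero (hunif : H.IsUniform r) (hreg : ∀ v ∈ H.verts, H.degree v = 1)
    (hcod : ∀ v u, H.codegree v u ≤ nibbleTolerance r ε) :
    NibbleInvariant H r ε (#H.verts) 0 1 where
  isSparse :=
    { isUniform := hunif
      degree_le_one := fun v => by
        by_cases hv : v ∈ H.verts
        · exact (hreg v hv).le
        · exact (degree_eq_zero_of_notMem hv).trans_le zero_le_one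
      codegree_le := hcod }
  card_verts := by simp only [mul_zero, add_zero]
  le_density := by simp only [Nat.cast_zero, zero_div, mul_zero, Real.exp_zero, le_refl]
  density_le_one := le_rfl
  deviation_le := by
    have hdev : H.deviation 1 = 0 :=
      sum_eq_zero fun u hu => by rw [hreg u hu, sub_self, sq, zero_mul]
    rw [hdev, Nat.cast_zero, zero_mul, zero_mul]

theorem exists_isMatching_of_regular (hr : 1 ≤ r) (hε : 0 < ε) (hunif : H.IsUniform r)
    (hreg : ∀ v ∈ H.verts, H.degree v = 1) (hcod : ∀ v u, H.codegree v u ≤ nibbleTolerance r ε) :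
    ∃ M, H.IsMatching M ∧ (1 - ε) * (#H.verts / r) ≤ #M := by
  rcases H.verts.eq_empty_or_nonempty with hverts | ⟨v, hv⟩
  · exact ⟨∅, ⟨empty_subset _, by simp⟩, by simp [hverts]⟩
  have hrN : r - 1 ≤ nibbleTolerance r ε * #H.verts := by
    calc (r - 1 : ℝ) = ∑ u ∈ H.verts, H.codegree v u := by
          rw [sum_codegree_verts hunif, hreg v hv, mul_one]
      _ ≤ nibbleTolerance r ε * #H.verts := by
          rw [mul_comm, ← nsmul_eq_mul]
          exact sum_le_card_nsmul _ _ _ fun u _ => hcod v u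
  have hsteps : ∀ t < ⌈(1 - ε) * (#H.verts / r)⌉₊, r * t < (1 - ε) * #H.verts := by
    intro t ht
    have hr0 : (0 : ℝ) < r := by exact_mod_cast hr
    have := Nat.lt_ceil.mp ht
    rw [← mul_div_assoc, lt_div_iff₀' hr0] at this
    exact this
  obtain ⟨M, hM, hcard⟩ := NibbleInvariant.exists_isMatching hr hε hrN hsteps _ (zero_add _)
    (nibbleInvariant_zero hunif hreg hcod)
  exact ⟨M, hM, hcard ▸ Nat.le_ceil _⟩

end Nibble

end WeightedHypergraph

/-! ### Counting cliques -/

section Cliques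

lemma isNClique_of_subset {V : Type*} {G : SimpleGraph V} {j i : ℕ} {K L : Finset V}
    (hL : G.IsNClique j L) (hKL : K ⊆ L) (hK : #K = i) : G.IsNClique i K :=
  ⟨hL.isClique.subset (coe_subset.mpr hKL), hK⟩

variable {V : Type*} [Fintype V] [DecidableEq V] (G : SimpleGraph V) [DecidableRel G.Adj]

/-- The `j`-cliques of `G` that contain `A`. -/
def cliquesContaining (j : ℕ) (A : Finset V) : Finset (Finset V) :=
  {K ∈ G.cliqueFinset j | A ⊆ K}

/-- The vertices adjacent to every element of `A`; the whole of `V` for `A = ∅`. -/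
def commonNeighborFinset (A : Finset V) : Finset V :=
  {v | ∀ u ∈ A, G.Adj u v}

/-- Any at most `s` vertices of `G` have at least a `1 - γ` fraction of all vertices as common
neighbors. This is the form in which the minimum degree enters the counting of cliques. -/
def HasManyCommonNeighbors (s : ℕ) (γ : ℝ) : Prop :=
  ∀ K : Finset V, #K ≤ s → (1 - γ) * Fintype.card V ≤ #(commonNeighborFinset G K)

variable {G}

lemma mem_cliquesContaining {j : ℕ} {A K : Finset V} :
    K ∈ cliquesContaining G j A ↔ G.IsNClique j K ∧ A ⊆ K := by
  rw [cliquesContaining, mem_filter, SimpleGraph.mem_cliqueFinset_iff]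

lemma mem_commonNeighborFinset {A : Finset V} {v : V} :
    v ∈ commonNeighborFinset G A ↔ ∀ u ∈ A, G.Adj u v := by
  simp only [commonNeighborFinset, mem_filter, mem_univ, true_and]

lemma notMem_of_mem_commonNeighborFinset {A : Finset V} {v : V}
    (hv : v ∈ commonNeighborFinset G A) : v ∉ A :=
  fun hvA => (mem_commonNeighborFinset.mp hv v hvA).ne rfl

lemma cliquesContaining_succ_self {j : ℕ} {K : Finset V} (hK : G.IsNClique j K) :
    cliquesContaining G (j + 1) K = (commonNeighborFinset G K).image (insert · K) := by
  ext L
  rw [mem_cliquesContaining, mem_image]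
  constructor
  · rintro ⟨hL, hKL⟩
    obtain ⟨v, hv, rfl⟩ := covBy_iff_exists_insert.mp <|
      covBy_iff_card_sdiff_eq_one.mpr ⟨hKL, by
        rw [card_sdiff_of_subset hKL, hL.card_eq, hK.card_eq, Nat.add_sub_cancel_left]⟩
    refine ⟨v, mem_commonNeighborFinset.mpr fun u hu => ?_, rfl⟩
    exact hL.isClique (mem_coe.mpr (mem_insert_of_mem hu)) (mem_coe.mpr (mem_insert_self v K))
      (ne_of_mem_of_not_mem hu hv)
  · rintro ⟨v, hv, rfl⟩
    exact ⟨hK.insert fun u hu => (mem_commonNeighborFinset.mp hv u hu).symm, subset_insert v K⟩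

lemma card_cliquesContaining_succ_self {j : ℕ} {K : Finset V} (hK : G.IsNClique j K) :
    #(cliquesContaining G (j + 1) K) = #(commonNeighborFinset G K) := by
  rw [cliquesContaining_succ_self hK]
  exact card_image_of_injOn fun v hv w _ h =>
    (insert_inj (notMem_of_mem_commonNeighborFinset (mem_coe.mp hv))).mp h

lemma card_cliquesContaining_succ_mul (j : ℕ) (A : Finset V) :
    #(cliquesContaining G (#A + j + 1) A) * (j + 1) =
      ∑ K ∈ cliquesContaining G (#A + j) A, #(commonNeighborFinset G K) := by
  have habove : ∀ K ∈ cliquesContaining G (#A + j) A,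
      #((cliquesContaining G (#A + j + 1) A).bipartiteAbove (· ⊆ ·) K) =
        #(commonNeighborFinset G K) := by
    intro K hK
    obtain ⟨hK, hAK⟩ := mem_cliquesContaining.mp hK
    rw [← card_cliquesContaining_succ_self hK]
    congr 1
    ext L
    simp only [mem_bipartiteAbove, mem_cliquesContaining]
    exact ⟨fun h => ⟨h.1.1, h.2⟩, fun h => ⟨⟨h.1, hAK.trans h.2⟩, h.2⟩⟩
  have hbelow : ∀ L ∈ cliquesContaining G (#A + j + 1) A,
      #((cliquesContaining G (#A + j) A).bipartiteBelow (· ⊆ ·) L) = j + 1 := by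
    intro L hL
    obtain ⟨hL, hAL⟩ := mem_cliquesContaining.mp hL
    have hcount := card_powersetCard_filter_superset hAL hL.card_eq
    rw [hL.card_eq, Nat.choose_one_right, add_assoc, Nat.add_sub_cancel_left] at hcount
    rw [← hcount]
    congr 1
    ext K
    simp only [mem_bipartiteBelow, mem_cliquesContaining, mem_filter, mem_powersetCard]
    exact ⟨fun h => ⟨⟨h.2, h.1.1.card_eq⟩, h.1.2⟩,
      fun h => ⟨⟨isNClique_of_subset hL h.1.1 h.1.2, h.2⟩, h.1.1⟩⟩
  rw [← sum_congr rfl habove, sum_card_bipartiteAbove_eq_sum_card_bipartiteBelow,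
    sum_congr rfl hbelow, sum_const, smul_eq_mul]

lemma cliquesContaining_card_subset (A : Finset V) : cliquesContaining G (#A) A ⊆ {A} := by
  intro K hK
  obtain ⟨hK, hAK⟩ := mem_cliquesContaining.mp hK
  exact mem_singleton.mpr (eq_of_subset_of_card_le hAK hK.card_eq.le).symm

lemma card_cliquesContaining_mul_factorial_le (A : Finset V) (j : ℕ) :
    #(cliquesContaining G (#A + j) A) * j.factorial ≤ Fintype.card V ^ j := by
  induction j with
  | zero => simpa using card_le_card (cliquesContaining_card_subset (G := G) A)
  | succ j ih =>
    calc #(cliquesContaining G (#A + j + 1) A) * (j + 1).factorial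
        = (∑ K ∈ cliquesContaining G (#A + j) A, #(commonNeighborFinset G K)) * j.factorial := by
          rw [← card_cliquesContaining_succ_mul, Nat.factorial_succ, mul_assoc]
      _ ≤ #(cliquesContaining G (#A + j) A) * Fintype.card V * j.factorial := by
          gcongr
          exact sum_le_card_nsmul _ _ _ fun K _ => card_le_univ _
      _ ≤ Fintype.card V ^ (j + 1) := by
          rw [mul_right_comm, pow_succ]
          gcongr

lemma le_card_cliquesContaining_mul_factorial {s : ℕ} {γ : ℝ} (hγ : γ ≤ 1)
    (hG : HasManyCommonNeighbors G s γ) {A : Finset V} (hA : G.IsClique A) (j : ℕ)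
    (hj : #A + j ≤ s + 1) :
    ((1 - γ) * Fintype.card V) ^ j ≤ #(cliquesContaining G (#A + j) A) * j.factorial := by
  induction j with
  | zero =>
    have hmem : A ∈ cliquesContaining G (#A + 0) A :=
      mem_cliquesContaining.mpr ⟨⟨hA, rfl⟩, subset_rfl⟩
    simpa using card_pos.mpr ⟨A, hmem⟩
  | succ j ih =>
    calc ((1 - γ) * Fintype.card V) ^ (j + 1)
        ≤ #(cliquesContaining G (#A + j) A) * j.factorial * ((1 - γ) * Fintype.card V) := by
          rw [pow_succ]
          exact mul_le_mul_of_nonneg_right (ih (by omega))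
            (mul_nonneg (sub_nonneg.mpr hγ) (Nat.cast_nonneg _))
      _ = (#(cliquesContaining G (#A + j) A) • ((1 - γ) * Fintype.card V)) * j.factorial := by
          rw [nsmul_eq_mul]
          ring
      _ ≤ (∑ K ∈ cliquesContaining G (#A + j) A, (#(commonNeighborFinset G K) : ℝ))
            * j.factorial := by
          gcongr
          refine card_nsmul_le_sum _ _ _ fun K hK => hG K ?_
          rw [(mem_cliquesContaining.mp hK).1.card_eq]
          omega
      _ = #(cliquesContaining G (#A + (j + 1)) A) * (j + 1).factorial := by
          rw [Nat.factorial_succ]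
          exact_mod_cast (by rw [← card_cliquesContaining_succ_mul, mul_assoc]; rfl)

lemma card_cliquesContaining_mul_pow_le (k : ℕ) (A : Finset V) :
    #(cliquesContaining G k A) * Fintype.card V ^ #A ≤ Fintype.card V ^ k := by
  rcases le_or_gt (#A) k with hAk | hAk
  · obtain ⟨j, rfl⟩ := Nat.exists_eq_add_of_le hAk
    rw [pow_add, mul_comm]
    gcongr
    exact (Nat.le_mul_of_pos_right _ j.factorial_pos).trans
      (card_cliquesContaining_mul_factorial_le A j)
  · have hempty : cliquesContaining G k A = ∅ := eq_empty_of_forall_notMem fun K hK => by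
      obtain ⟨hK, hAK⟩ := mem_cliquesContaining.mp hK
      exact hAk.not_ge (hK.card_eq ▸ card_le_card hAK)
    rw [hempty, card_empty, zero_mul]
    exact Nat.zero_le _

end Cliques

/-! ### Fractional clique decompositions -/

section Gadget

variable {α : Type*} [DecidableEq α]

/-- A signed weighting of `k`-sets `K` attached to a pair `e`. On the `k`-subsets of any
`(k + 2)`-set containing `e` it adds total weight one to the pair `e` and zero to every other pair
(`sum_edgeGadget`); it is the unique such weighting depending only on `#(e ∩ K)`. -/
noncomputable def edgeGadget (k : ℕ) (e K : Finset α) : ℝ :=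
  (k - 2) / k - (k - 2) / (k - 1) * #(e ∩ K) + if e ⊆ K then 1 else 0

lemma abs_edgeGadget_le_one {k : ℕ} (hk : 2 ≤ k) {e : Finset α} (he : #e = 2) (K : Finset α) :
    |edgeGadget k e K| ≤ 1 := by
  have hk' : (2 : ℝ) ≤ k := by exact_mod_cast hk
  have hk0 : (k : ℝ) ≠ 0 := by positivity
  have hk1 : (k : ℝ) - 1 ≠ 0 := by linarith
  have hk1' : (0 : ℝ) < k * (k - 1) := mul_pos (by positivity) (by linarith)
  have hsubset : e ⊆ K ↔ #(e ∩ K) = 2 := he ▸ subset_iff_card_inter_eq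
  have hle : #(e ∩ K) ≤ 2 := he ▸ card_le_card inter_subset_left
  simp only [edgeGadget, hsubset]
  rw [abs_le]
  interval_cases #(e ∩ K)
  · have hvalue : ((k : ℝ) - 2) / k - (k - 2) / (k - 1) * (0 : ℕ) + (if 0 = 2 then 1 else 0) =
        (k - 2) / k := by simp
    rw [hvalue, le_div_iff₀ (by positivity), div_le_iff₀ (by positivity)]
    constructor <;> linarith
  · have hvalue : ((k : ℝ) - 2) / k - (k - 2) / (k - 1) * (1 : ℕ) + (if 1 = 2 then 1 else 0) =
        -(k - 2) / (k * (k - 1)) := by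
      simp only [Nat.cast_one, OfNat.one_ne_ofNat, if_false]
      field_simp
      ring
    rw [hvalue, le_div_iff₀ hk1', div_le_iff₀ hk1']
    constructor <;> nlinarith
  · have hvalue : ((k : ℝ) - 2) / k - (k - 2) / (k - 1) * (2 : ℕ) + (if 2 = 2 then 1 else 0) =
        2 / (k * (k - 1)) := by
      simp only [Nat.cast_ofNat, if_true]
      field_simp
      ring
    rw [hvalue, le_div_iff₀ hk1', div_le_iff₀ hk1']
    constructor <;> nlinarith

variable {k : ℕ} {Q A e f : Finset α}

lemma cast_card_powersetCard_filter_superset (hQ : #Q = k + 2) (hA : A ⊆ Q) :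
    (#{K ∈ Q.powersetCard k | A ⊆ K} : ℝ) = (k + 2 - #A) * (k + 1 - #A) / 2 := by
  rw [card_powersetCard_filter_superset hA hQ, Nat.cast_choose_two,
    Nat.cast_sub (card_le_card hA), hQ]
  push_cast
  ring

lemma sum_card_inter_powersetCard (hQ : #Q = k + 2) (he : e ⊆ Q) (hf : f ⊆ Q) :
    ∑ K ∈ Q.powersetCard k with f ⊆ K, (#(e ∩ K) : ℝ) =
      #(e ∩ f) * ((k + 2 - #f) * (k + 1 - #f) / 2) +
        #(e \ f) * ((k + 1 - #f) * (k - #f) / 2) := by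
  have hcount : ∀ v ∈ e, (#{K ∈ {K ∈ Q.powersetCard k | f ⊆ K} | v ∈ K} : ℝ) =
      (k + 2 - #(insert v f)) * (k + 1 - #(insert v f)) / 2 := by
    intro v hv
    rw [← cast_card_powersetCard_filter_superset hQ (insert_subset (he hv) hf), filter_filter]
    simp only [insert_subset_iff, and_comm]
  calc ∑ K ∈ Q.powersetCard k with f ⊆ K, (#(e ∩ K) : ℝ)
      = ∑ v ∈ e, (#{K ∈ {K ∈ Q.powersetCard k | f ⊆ K} | v ∈ K} : ℝ) := by
        simp_rw [← filter_mem_eq_inter, card_filter, Nat.cast_sum]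
        exact sum_comm
    _ = ∑ v ∈ e, ((k : ℝ) + 2 - #(insert v f)) * (k + 1 - #(insert v f)) / 2 :=
        sum_congr rfl hcount
    _ = _ := by
        rw [← sum_inter_add_sum_sdiff e f]
        congr 1
        · rw [← nsmul_eq_mul]
          refine sum_eq_card_nsmul fun v hv => ?_
          rw [insert_eq_of_mem (mem_inter.mp hv).2]
        · rw [← nsmul_eq_mul]
          refine sum_eq_card_nsmul fun v hv => ?_
          rw [card_insert_of_notMem (mem_sdiff.mp hv).2]
          push_cast
          ring

theorem sum_edgeGadget (hk : 2 ≤ k) (hQ : #Q = k + 2) (he : e ∈ Q.powersetCard 2)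
    (hf : f ∈ Q.powersetCard 2) :
    ∑ K ∈ Q.powersetCard k with f ⊆ K, edgeGadget k e K = if e = f then 1 else 0 := by
  obtain ⟨heQ, he⟩ := mem_powersetCard.mp he
  obtain ⟨hfQ, hf⟩ := mem_powersetCard.mp hf
  have hk' : (2 : ℝ) ≤ k := by exact_mod_cast hk
  have hk0 : (k : ℝ) ≠ 0 := by positivity
  have hk1 : (k : ℝ) - 1 ≠ 0 := by linarith
  have hsdiff : #(e \ f) + #(e ∩ f) = 2 := by rw [card_sdiff_add_card_inter, he]
  have hunion : #(e ∪ f) + #(e ∩ f) = 4 := by rw [card_union_add_card_inter, he, hf]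
  have heq : e = f ↔ #(e ∩ f) = 2 := by
    rw [← he, ← subset_iff_card_inter_eq]
    exact ⟨fun h => h.subset, fun h => eq_of_subset_of_card_le h (hf.trans he.symm).le⟩
  have hboth : (∑ K ∈ Q.powersetCard k with f ⊆ K, if e ⊆ K then (1 : ℝ) else 0) =
      (k + 2 - #(e ∪ f)) * (k + 1 - #(e ∪ f)) / 2 := by
    rw [← cast_card_powersetCard_filter_superset hQ (union_subset heQ hfQ), ← sum_filter,
      filter_filter, sum_const, nsmul_one]
    simp only [union_subset_iff, and_comm]
  simp_rw [edgeGadget, heq]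
  rw [sum_add_distrib, sum_sub_distrib, sum_const, nsmul_eq_mul, ← mul_sum, hboth,
    sum_card_inter_powersetCard hQ heQ hfQ, cast_card_powersetCard_filter_superset hQ hfQ, hf]
  have hsdiff' : (#(e \ f) : ℝ) = 2 - #(e ∩ f) := eq_sub_of_add_eq (by exact_mod_cast hsdiff)
  have hunion' : (#(e ∪ f) : ℝ) = 4 - #(e ∩ f) := eq_sub_of_add_eq (by exact_mod_cast hunion)
  rw [hsdiff', hunion']
  have hle : #(e ∩ f) ≤ 2 := by omega
  interval_cases #(e ∩ f) <;> norm_num <;> field_simp <;> ring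

end Gadget

section FractionalDecomposition

variable {V : Type*} [Fintype V]

/-- The reciprocal of the number of `k`-cliques through an edge that one would see, to leading
order, in a complete graph on `V`. Meaningful for `2 ≤ k` and nonempty `V`. -/
noncomputable def baseWeight (V : Type*) [Fintype V] (k : ℕ) : ℝ :=
  (k - 2).factorial / Fintype.card V ^ (k - 2)

lemma baseWeight_nonneg {k : ℕ} : 0 ≤ baseWeight V k := by
  unfold baseWeight
  positivity

lemma factorial_div_pow_mul_sq_eq_mul_baseWeight [Nonempty V] {k : ℕ} (hk : 2 ≤ k) :
    (k.factorial : ℝ) / Fintype.card V ^ k * Fintype.card V ^ 2 =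
      k * (k - 1) * baseWeight V k := by
  obtain ⟨j, rfl⟩ := Nat.exists_eq_add_of_le' hk
  rw [baseWeight, Nat.add_sub_cancel, Nat.factorial_succ, Nat.factorial_succ]
  push_cast
  field_simp
  ring

variable [DecidableEq V] (G : SimpleGraph V) [DecidableRel G.Adj]

/-- The weight missing at the edge `e` when every `k`-clique carries `baseWeight V k`, split evenly
among the `(k + 2)`-cliques through `e`. -/
noncomputable def edgeDeficit (k : ℕ) (e : Finset V) : ℝ :=
  (1 - baseWeight V k * #(cliquesContaining G k e)) / #(cliquesContaining G (k + 2) e)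

/-- The signed weight that the `k`-clique `K` receives when, inside every `(k + 2)`-clique, the
deficit of every edge is repaired with its gadget. -/
noncomputable def weightCorrection (k : ℕ) (K : Finset V) : ℝ :=
  ∑ Q ∈ cliquesContaining G (k + 2) K, ∑ e ∈ Q.powersetCard 2, edgeDeficit G k e * edgeGadget k e K

variable {G} {k : ℕ} {γ : ℝ}

lemma sum_cliquesContaining_gadget (hk : 2 ≤ k) (g : Finset V → ℝ) {f : Finset V} (hf : #f = 2) :
    ∑ K ∈ cliquesContaining G k f, ∑ Q ∈ cliquesContaining G (k + 2) K,
        ∑ e ∈ Q.powersetCard 2, g e * edgeGadget k e K =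
      #(cliquesContaining G (k + 2) f) * g f := by
  calc ∑ K ∈ cliquesContaining G k f, ∑ Q ∈ cliquesContaining G (k + 2) K,
        ∑ e ∈ Q.powersetCard 2, g e * edgeGadget k e K
      = ∑ Q ∈ cliquesContaining G (k + 2) f, ∑ K ∈ Q.powersetCard k with f ⊆ K,
          ∑ e ∈ Q.powersetCard 2, g e * edgeGadget k e K := by
        refine sum_comm' fun K Q => ?_
        simp only [mem_cliquesContaining, mem_filter, mem_powersetCard]
        exact ⟨fun ⟨⟨hK, hfK⟩, hQ, hKQ⟩ => ⟨⟨⟨hKQ, hK.card_eq⟩, hfK⟩, hQ, hfK.trans hKQ⟩,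
          fun ⟨⟨⟨hKQ, hK⟩, hfK⟩, hQ, _⟩ => ⟨⟨isNClique_of_subset hQ hKQ hK, hfK⟩, hQ, hKQ⟩⟩
    _ = ∑ _Q ∈ cliquesContaining G (k + 2) f, g f := by
        refine sum_congr rfl fun Q hQ => ?_
        obtain ⟨hQ, hfQ⟩ := mem_cliquesContaining.mp hQ
        have hf : f ∈ Q.powersetCard 2 := mem_powersetCard.mpr ⟨hfQ, hf⟩
        rw [sum_comm]
        simp_rw [← mul_sum]
        rw [sum_congr rfl fun e he => by rw [sum_edgeGadget hk hQ.card_eq he hf]]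
        simp only [mul_ite, mul_one, mul_zero, sum_ite_eq', hf, if_true]
    _ = #(cliquesContaining G (k + 2) f) * g f := by rw [sum_const, nsmul_eq_mul]

lemma one_sub_mul_mul_pow_le (hγ : γ ≤ 1) {s : ℕ} (hG : HasManyCommonNeighbors G s γ)
    {A : Finset V} (hA : G.IsClique A) {j : ℕ} (hj : #A + j ≤ s + 1) :
    (1 - j * γ) * Fintype.card V ^ j ≤ #(cliquesContaining G (#A + j) A) * j.factorial := by
  refine le_trans ?_ (le_card_cliquesContaining_mul_factorial hγ hG hA j hj)
  rw [mul_pow]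
  gcongr
  have hbernoulli := one_add_mul_le_pow (show (-2 : ℝ) ≤ -γ by linarith) j
  rwa [mul_neg, ← sub_eq_add_neg, ← sub_eq_add_neg] at hbernoulli

lemma baseWeight_mul_card_mem_Icc [Nonempty V] (hk : 2 ≤ k) (hγ0 : 0 ≤ γ) (hγ : γ ≤ 1)
    (hG : HasManyCommonNeighbors G (k + 1) γ) {e : Finset V} (he : G.IsNClique 2 e) :
    baseWeight V k * #(cliquesContaining G k e) ∈ Set.Icc (1 - k * γ) 1 := by
  obtain ⟨j, rfl⟩ := Nat.exists_eq_add_of_le hk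
  have hpow : (0 : ℝ) < Fintype.card V ^ j := by positivity
  have hlower := one_sub_mul_mul_pow_le hγ hG he.isClique (j := j) (by rw [he.card_eq]; omega)
  have hupper := card_cliquesContaining_mul_factorial_le (G := G) e j
  rw [he.card_eq] at hlower hupper
  rw [baseWeight, Nat.add_sub_cancel_left, div_mul_eq_mul_div, mul_comm (j.factorial : ℝ)]
  constructor
  · rw [le_div_iff₀ hpow]
    refine le_trans ?_ hlower
    gcongr
    exact Nat.le_add_left j 2
  · rw [div_le_one hpow]
    exact_mod_cast hupper

lemma card_pow_le_card_cliquesContaining (hγ : γ ≤ 1) (hkγ : k * γ ≤ 1 / 2)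
    (hG : HasManyCommonNeighbors G (k + 1) γ) {e : Finset V} (he : G.IsNClique 2 e) :
    (Fintype.card V : ℝ) ^ k / (2 * k.factorial) ≤ #(cliquesContaining G (k + 2) e) := by
  have hlower := one_sub_mul_mul_pow_le hγ hG he.isClique (j := k) (by rw [he.card_eq]; omega)
  rw [he.card_eq, add_comm 2 k] at hlower
  have hpow : (0 : ℝ) ≤ Fintype.card V ^ k := by positivity
  rw [div_le_iff₀ (by positivity)]
  nlinarith

lemma abs_edgeDeficit_le [Nonempty V] (hk : 2 ≤ k) (hγ0 : 0 ≤ γ) (hkγ : k * γ ≤ 1 / 2)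
    (hG : HasManyCommonNeighbors G (k + 1) γ) {e : Finset V} (he : G.IsNClique 2 e) :
    |edgeDeficit G k e| ≤ k * γ / (Fintype.card V ^ k / (2 * k.factorial)) := by
  have hk' : (2 : ℝ) ≤ k := by exact_mod_cast hk
  have hγ : γ ≤ 1 := by nlinarith
  have hbase := baseWeight_mul_card_mem_Icc hk hγ0 hγ hG he
  rw [edgeDeficit, abs_div, abs_of_nonneg (sub_nonneg.mpr hbase.2), Nat.abs_cast]
  have hcount := card_pow_le_card_cliquesContaining hγ hkγ hG he
  gcongr
  linarith [hbase.1]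

lemma abs_sum_edgeDeficit_mul_edgeGadget_le [Nonempty V] (hk : 2 ≤ k) (hγ0 : 0 ≤ γ)
    (hkγ : k * γ ≤ 1 / 2) (hG : HasManyCommonNeighbors G (k + 1) γ) {Q : Finset V}
    (hQ : G.IsNClique (k + 2) Q) (K : Finset V) :
    |∑ e ∈ Q.powersetCard 2, edgeDeficit G k e * edgeGadget k e K| ≤
      (k + 2) * (k + 1) / 2 * (k * γ / (Fintype.card V ^ k / (2 * k.factorial))) := by
  have hchoose : (#(Q.powersetCard 2) : ℝ) = (k + 2) * (k + 1) / 2 := by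
    rw [card_powersetCard, hQ.card_eq, Nat.cast_choose_two]
    push_cast
    ring
  rw [← hchoose, ← nsmul_eq_mul]
  refine (abs_sum_le_sum_abs _ _).trans (sum_le_card_nsmul _ _ _ fun e he => ?_)
  obtain ⟨heQ, he⟩ := mem_powersetCard.mp he
  rw [abs_mul]
  exact (mul_le_of_le_one_right (abs_nonneg _) (abs_edgeGadget_le_one hk he K)).trans
    (abs_edgeDeficit_le hk hγ0 hkγ hG (isNClique_of_subset hQ heQ he))

lemma abs_weightCorrection_le [Nonempty V] (hk : 2 ≤ k) (hγ0 : 0 ≤ γ) (hkγ : k ^ 5 * γ ≤ 1)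
    (hG : HasManyCommonNeighbors G (k + 1) γ) {K : Finset V} (hK : #K = k) :
    |weightCorrection G k K| ≤ baseWeight V k := by
  have hk' : (2 : ℝ) ≤ k := by exact_mod_cast hk
  have hkγ' := mul_le_half_of_pow_five_mul_le_one hk' hkγ
  set n : ℝ := (Fintype.card V : ℝ) with hn
  have hcount : (#(cliquesContaining G (k + 2) K) : ℝ) ≤ n ^ 2 / 2 := by
    have hupper := card_cliquesContaining_mul_factorial_le (G := G) K 2
    rw [hK, Nat.factorial_two] at hupper
    rw [le_div_iff₀ two_pos, hn]
    exact_mod_cast hupper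
  have hsmall : k ^ 2 * (k - 1) * (k + 1) * (k + 2) / 2 * γ ≤ 1 := by
    refine le_trans ?_ hkγ
    gcongr
    have hsq : (0 : ℝ) ≤ k ^ 2 * (k * (k - 1) ^ 2) := by positivity
    nlinarith
  calc |weightCorrection G k K|
      ≤ #(cliquesContaining G (k + 2) K) *
          ((k + 2) * (k + 1) / 2 * (k * γ / (n ^ k / (2 * k.factorial)))) := by
        rw [← nsmul_eq_mul]
        exact (abs_sum_le_sum_abs _ _).trans <| sum_le_card_nsmul _ _ _ fun Q hQ =>
          abs_sum_edgeDeficit_mul_edgeGadget_le hk hγ0 hkγ' hG (mem_cliquesContaining.mp hQ).1 K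
    _ ≤ n ^ 2 / 2 * ((k + 2) * (k + 1) / 2 * (k * γ / (n ^ k / (2 * k.factorial)))) := by
        gcongr
    _ = (k + 2) * (k + 1) * k / 2 * γ * (k.factorial / n ^ k * n ^ 2) := by field_simp
    _ = k ^ 2 * (k - 1) * (k + 1) * (k + 2) / 2 * γ * baseWeight V k := by
        rw [factorial_div_pow_mul_sq_eq_mul_baseWeight hk]
        ring
    _ ≤ baseWeight V k := mul_le_of_le_one_left baseWeight_nonneg hsmall

theorem exists_fractional_clique_decomposition [Nonempty V] (hk : 2 ≤ k) (hγ0 : 0 ≤ γ)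
    (hkγ : k ^ 5 * γ ≤ 1) (hG : HasManyCommonNeighbors G (k + 1) γ) :
    ∃ w : Finset V → ℝ, (∀ K ∈ G.cliqueFinset k, w K ∈ Set.Icc 0 (2 * baseWeight V k)) ∧
      ∀ e ∈ G.cliqueFinset 2, ∑ K ∈ cliquesContaining G k e, w K = 1 := by
  refine ⟨fun K => baseWeight V k + weightCorrection G k K, fun K hK => ?_, fun e he => ?_⟩
  · have hbound := abs_le.mp
      (abs_weightCorrection_le hk hγ0 hkγ hG (SimpleGraph.mem_cliqueFinset_iff.mp hK).card_eq)
    constructor <;> linarith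
  · have he := SimpleGraph.mem_cliqueFinset_iff.mp he
    have hcount : (#(cliquesContaining G (k + 2) e) : ℝ) ≠ 0 := by
      have hk' : (2 : ℝ) ≤ k := by exact_mod_cast hk
      have hkγ' := mul_le_half_of_pow_five_mul_le_one hk' hkγ
      have hlower := card_pow_le_card_cliquesContaining (by nlinarith) hkγ' hG he
      exact (lt_of_lt_of_le (by positivity) hlower).ne'
    rw [sum_add_distrib, sum_const, nsmul_eq_mul]
    simp only [weightCorrection]
    rw [sum_cliquesContaining_gadget hk _ he.card_eq, edgeDeficit, mul_div_cancel₀ _ hcount]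
    ring

end FractionalDecomposition

/-! ### From matchings to packings -/

section CliqueHypergraph

open WeightedHypergraph

variable {V : Type*} [Fintype V] [DecidableEq V] {G : SimpleGraph V} [DecidableRel G.Adj]
  {k : ℕ} {w : Finset V → ℝ}

/-- The hypergraph whose vertices are the edges of `G`, as two-element sets, and whose edges are
the edge sets of the `k`-cliques of `G`, weighted by `w`. Its matchings are the `K_k`-packings
of `G`. -/
def cliqueHypergraph (G : SimpleGraph V) [DecidableRel G.Adj] (k : ℕ) (w : Finset V → ℝ)
    (hw : ∀ K ∈ G.cliqueFinset k, 0 ≤ w K) : WeightedHypergraph (Finset V) (Finset V) where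
  verts := G.cliqueFinset 2
  index := G.cliqueFinset k
  edge K := K.powersetCard 2
  weight := w
  edge_subset K hK e he := by
    rw [SimpleGraph.mem_cliqueFinset_iff] at hK ⊢
    exact isNClique_of_subset hK (mem_powersetCard.mp he).1 (mem_powersetCard.mp he).2
  weight_nonneg := hw

lemma isUniform_cliqueHypergraph (hw : ∀ K ∈ G.cliqueFinset k, 0 ≤ w K) :
    (cliqueHypergraph G k w hw).IsUniform (k.choose 2) := fun K hK =>
  (card_powersetCard 2 K).trans
    (congrArg (Nat.choose · 2) (SimpleGraph.mem_cliqueFinset_iff.mp hK).card_eq)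

lemma degree_cliqueHypergraph (hw : ∀ K ∈ G.cliqueFinset k, 0 ≤ w K) {e : Finset V}
    (he : #e = 2) :
    (cliqueHypergraph G k w hw).degree e = ∑ K ∈ cliquesContaining G k e, w K :=
  sum_congr (filter_congr fun _ _ => by
    simp only [cliqueHypergraph, mem_powersetCard, he, and_true]) fun _ _ => rfl

lemma codegree_cliqueHypergraph_mul_le [Nonempty V] (hw : ∀ K ∈ G.cliqueFinset k, 0 ≤ w K) {B : ℝ}
    (hB0 : 0 ≤ B) (hB : ∀ K ∈ G.cliqueFinset k, w K ≤ B) (e f : Finset V) :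
    (cliqueHypergraph G k w hw).codegree e f * Fintype.card V ^ 3 ≤ B * Fintype.card V ^ k := by
  by_cases hef : f ≠ e ∧ #e = 2 ∧ #f = 2
  · obtain ⟨hne, he, hf⟩ := hef
    have hunion : 3 ≤ #(e ∪ f) := by
      have hlt := card_lt_card_union hne.symm (he.trans hf.symm)
      rwa [he] at hlt
    have hcount : (#(cliquesContaining G k (e ∪ f)) : ℝ) * Fintype.card V ^ 3 ≤
        Fintype.card V ^ k := by
      have hcard : 1 ≤ Fintype.card V := Fintype.card_pos
      exact_mod_cast (Nat.mul_le_mul_left _ (Nat.pow_le_pow_right hcard hunion)).trans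
        (card_cliquesContaining_mul_pow_le k (e ∪ f))
    have hcodegree : (cliqueHypergraph G k w hw).codegree e f ≤
        #(cliquesContaining G k (e ∪ f)) * B := by
      rw [← nsmul_eq_mul]
      refine (sum_le_sum_of_subset_of_nonneg (fun K hK => ?_) fun K hK _ => ?_).trans
        (sum_le_card_nsmul (cliquesContaining G k (e ∪ f)) w B fun K hK => ?_)
      · obtain ⟨hK, -, heK, hfK⟩ := mem_filter.mp hK
        exact mem_filter.mpr ⟨hK,
          union_subset (mem_powersetCard.mp heK).1 (mem_powersetCard.mp hfK).1⟩
      · exact hw K (mem_filter.mp hK).1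
      · exact hB K (mem_filter.mp hK).1
    calc (cliqueHypergraph G k w hw).codegree e f * (Fintype.card V : ℝ) ^ 3
        ≤ #(cliquesContaining G k (e ∪ f)) * B * Fintype.card V ^ 3 := by gcongr
      _ = B * (#(cliquesContaining G k (e ∪ f)) * Fintype.card V ^ 3) := by ring
      _ ≤ B * Fintype.card V ^ k := by gcongr
  · have hzero : (cliqueHypergraph G k w hw).codegree e f = 0 := by
      refine sum_eq_zero fun K hK => absurd ?_ hef
      obtain ⟨-, hne, he, hf⟩ := mem_filter.mp hK
      exact ⟨hne, (mem_powersetCard.mp he).2, (mem_powersetCard.mp hf).2⟩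
    rw [hzero, zero_mul]
    positivity

lemma exists_edgeDisjoint_cliques [Nonempty V] {ε γ : ℝ} (hk : 2 ≤ k) (hε : 0 < ε) (hγ0 : 0 ≤ γ)
    (hkγ : k ^ 5 * γ ≤ 1) (hG : HasManyCommonNeighbors G (k + 1) γ)
    (hV : 2 * (k - 2).factorial / nibbleTolerance (k.choose 2) ε ≤ Fintype.card V) :
    ∃ M : Finset (Finset V), (∀ K ∈ M, G.IsNClique k K) ∧
      (M : Set (Finset V)).Pairwise
        (fun K L => Disjoint (K.powersetCard 2) (L.powersetCard 2)) ∧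
      (1 - ε) * (#(G.cliqueFinset 2) / k.choose 2) ≤ #M := by
  obtain ⟨w, hw, hsum⟩ := exists_fractional_clique_decomposition hk hγ0 hkγ hG
  set H := cliqueHypergraph G k w fun K hK => (hw K hK).1
  have hr : 1 ≤ k.choose 2 := Nat.choose_pos hk
  have hreg : ∀ e ∈ H.verts, H.degree e = 1 := fun e he => by
    rw [degree_cliqueHypergraph _ (SimpleGraph.mem_cliqueFinset_iff.mp he).card_eq, hsum e he]
  have hcod : ∀ e f, H.codegree e f ≤ nibbleTolerance (k.choose 2) ε := by
    intro e f
    have hcount := codegree_cliqueHypergraph_mul_le (fun K hK => (hw K hK).1)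
      (mul_nonneg zero_le_two baseWeight_nonneg) (fun K hK => (hw K hK).2) e f
    rw [← le_div_iff₀ (by positivity)] at hcount
    refine hcount.trans ?_
    rw [div_le_comm₀ (nibbleTolerance_pos hr hε) (by positivity)] at hV
    convert hV using 1
    obtain ⟨j, rfl⟩ := Nat.exists_eq_add_of_le' hk
    rw [baseWeight, Nat.add_sub_cancel]
    field_simp
    ring
  obtain ⟨M, hM, hcard⟩ := exists_isMatching_of_regular hr hε (isUniform_cliqueHypergraph _)
    hreg hcod
  exact ⟨M, fun K hK => SimpleGraph.mem_cliqueFinset_iff.mp (hM.1 hK), hM.2, hcard⟩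

end CliqueHypergraph

section Subgraphs

variable {V : Type*} {G : SimpleGraph V}

lemma isCopy_induce_of_isNClique {k : ℕ} {K : Finset V} (hK : G.IsNClique k K) :
    ((⊤ : G.Subgraph).induce (K : Set V)).IsCopy (⊤ : SimpleGraph (Fin k)) := by
  have htop : ((⊤ : G.Subgraph).induce (K : Set V)).coe = ⊤ := by
    ext a b
    exact ⟨fun h => h.ne, fun h =>
      ⟨a.2, b.2, hK.isClique a.2 b.2 fun hab => h (Subtype.ext hab)⟩⟩
  rw [SimpleGraph.Subgraph.IsCopy, htop]
  exact ⟨SimpleGraph.Iso.completeGraph (K.equivFinOfCardEq hK.card_eq)⟩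

lemma disjoint_edgeSet_induce {K L : Finset V}
    (hKL : Disjoint (K.powersetCard 2) (L.powersetCard 2)) :
    Disjoint ((⊤ : G.Subgraph).induce (K : Set V)).edgeSet
      ((⊤ : G.Subgraph).induce (L : Set V)).edgeSet := by
  classical
  rw [Set.disjoint_left]
  rintro ⟨a, b⟩ ⟨haK, hbK, hab⟩ ⟨haL, hbL, -⟩
  have hpair : #{a, b} = 2 := card_pair hab.adj_sub.ne
  exact Finset.disjoint_left.mp hKL
    (mem_powersetCard.mpr ⟨insert_subset haK (singleton_subset_iff.mpr hbK), hpair⟩)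
    (mem_powersetCard.mpr ⟨insert_subset haL (singleton_subset_iff.mpr hbL), hpair⟩)

lemma exists_packing_of_edgeDisjoint_cliques {k : ℕ} {M : Finset (Finset V)}
    (hclique : ∀ K ∈ M, G.IsNClique k K)
    (hdisj : (M : Set (Finset V)).Pairwise
      fun K L => Disjoint (K.powersetCard 2) (L.powersetCard 2)) :
    ∃ P : Finset G.Subgraph, (∀ c ∈ P, c.IsCopy (⊤ : SimpleGraph (Fin k))) ∧
      (P : Set G.Subgraph).Pairwise (fun c d => Disjoint c.edgeSet d.edgeSet) ∧ #P = #M := by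
  classical
  have hinj : Function.Injective fun K : Finset V => (⊤ : G.Subgraph).induce (K : Set V) :=
    fun K L hKL => coe_injective (congrArg SimpleGraph.Subgraph.verts hKL)
  refine ⟨M.image fun K : Finset V => (⊤ : G.Subgraph).induce (K : Set V), ?_, ?_,
    card_image_of_injective M hinj⟩
  · exact forall_mem_image.mpr fun K hK => isCopy_induce_of_isNClique (hclique K hK)
  · rw [coe_image, hinj.injOn.pairwise_image]
    exact hdisj.imp fun K L => disjoint_edgeSet_induce

variable [Fintype V] [DecidableEq V] [DecidableRel G.Adj]

lemma ncard_edgeSet_eq_card_cliqueFinset_two : G.edgeSet.ncard = #(G.cliqueFinset 2) := by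
  have himage : Sym2.toFinset '' G.edgeSet = G.cliqueFinset 2 := by
    ext e
    rw [mem_coe, SimpleGraph.mem_cliqueFinset_iff]
    constructor
    · rintro ⟨⟨a, b⟩, hab, rfl⟩
      rw [Sym2.toFinset_mk_eq]
      exact ⟨by simpa using fun _ => hab, card_pair hab.ne⟩
    · intro he
      obtain ⟨a, b, hab, rfl⟩ := card_eq_two.mp he.card_eq
      exact ⟨s(a, b), he.isClique (by simp) (by simp) hab, Sym2.toFinset_mk_eq⟩
  rw [← Set.ncard_coe_finset, ← himage, Set.ncard_image_of_injective]
  intro e e' h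
  ext v
  rw [← Sym2.mem_toFinset, h, Sym2.mem_toFinset]

lemma card_compl_neighborFinset_le {η : ℝ} (hη : 1 ≤ η * Fintype.card V) {v : V}
    (hdeg : (1 - η) * (Fintype.card V - 1) ≤ ((G.neighborSet v).ncard : ℝ)) :
    (#(G.neighborFinset v)ᶜ : ℝ) ≤ 2 * η * Fintype.card V := by
  have hη0 : 0 < η := pos_of_mul_pos_left (one_pos.trans_le hη) (Nat.cast_nonneg _)
  rw [← SimpleGraph.coe_neighborFinset, Set.ncard_coe_finset] at hdeg
  rw [card_compl, Nat.cast_sub (card_le_univ _)]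
  linarith

lemma hasManyCommonNeighbors_of_minDegree {η : ℝ} (hη : 1 ≤ η * Fintype.card V)
    (hdeg : ∀ v, (1 - η) * (Fintype.card V - 1) ≤ ((G.neighborSet v).ncard : ℝ)) (s : ℕ) :
    HasManyCommonNeighbors G s (2 * s * η) := by
  intro K hK
  have hcompl : (commonNeighborFinset G K)ᶜ = K.biUnion fun u => (G.neighborFinset u)ᶜ := by
    ext v
    simp only [mem_compl, mem_commonNeighborFinset, mem_biUnion, SimpleGraph.mem_neighborFinset,
      not_forall, exists_prop]
  have hcard : (#(commonNeighborFinset G K)ᶜ : ℝ) ≤ 2 * s * η * Fintype.card V :=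
    calc (#(commonNeighborFinset G K)ᶜ : ℝ)
        ≤ ∑ u ∈ K, (#(G.neighborFinset u)ᶜ : ℝ) := by
          rw [hcompl]
          exact_mod_cast card_biUnion_le
      _ ≤ #K • (2 * η * Fintype.card V) :=
          sum_le_card_nsmul _ _ _ fun u _ => card_compl_neighborFinset_le hη (hdeg u)
      _ ≤ s • (2 * η * Fintype.card V) := nsmul_le_nsmul_left (by linarith) hK
      _ = 2 * s * η * Fintype.card V := by
          rw [nsmul_eq_mul]
          ring
  rw [card_compl, Nat.cast_sub (card_le_univ _)] at hcard
  linarith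

end Subgraphs

end Packing

theorem kk_packing_of_min_degree_general.{u} (k : ℕ) (hk : 2 ≤ k) (ε : ℝ) (hε : 0 < ε) :
    ∃ n₀ : ℕ, ∀ (V : Type u) [Fintype V] (G : SimpleGraph V), n₀ ≤ Fintype.card V →
      (∀ v, ((1 : ℝ) - 1 / (3 * (k : ℝ) ^ 6)) * ((Fintype.card V : ℝ) - 1) ≤
        ((G.neighborSet v).ncard : ℝ)) →
      ∃ P : Finset G.Subgraph,
        (∀ c ∈ P, c.IsCopy (⊤ : SimpleGraph (Fin k))) ∧
        (P : Set G.Subgraph).Pairwise (fun c d => Disjoint c.edgeSet d.edgeSet) ∧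
        (1 - ε) * ((G.edgeSet.ncard : ℝ) / ((k : ℝ) * ((k : ℝ) - 1) / 2)) ≤ (P.card : ℝ) := by
  have hk' : (2 : ℝ) ≤ k := by exact_mod_cast hk
  set η : ℝ := 1 / (3 * (k : ℝ) ^ 6) with hη
  set n₀ : ℝ := 2 * (k - 2).factorial / WeightedHypergraph.nibbleTolerance (k.choose 2) ε
  refine ⟨⌈max (1 / η) n₀⌉₊, fun V _ G hV hdeg => ?_⟩
  classical
  obtain ⟨hVη, hVn₀⟩ := max_le_iff.mp (Nat.ceil_le.mp hV)
  have hηV : 1 ≤ η * Fintype.card V := (div_le_iff₀' (by positivity)).mp hVη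
  have : Nonempty V := Fintype.card_pos_iff.mp <| Nat.pos_of_ne_zero fun h => by
    rw [h, Nat.cast_zero, mul_zero] at hηV
    exact hηV.not_gt one_pos
  have hsmall : k ^ 5 * (2 * (k + 1 : ℕ) * η) ≤ 1 := by
    rw [hη]
    push_cast
    field_simp
    linarith
  obtain ⟨M, hclique, hdisj, hM⟩ := exists_edgeDisjoint_cliques hk hε (by positivity) hsmall
    (hasManyCommonNeighbors_of_minDegree hηV hdeg (k + 1)) hVn₀
  obtain ⟨P, hcopy, hPdisj, hP⟩ := exists_packing_of_edgeDisjoint_cliques hclique hdisj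
  refine ⟨P, hcopy, hPdisj, ?_⟩
  rwa [hP, ncard_edgeSet_eq_card_cliqueFinset_two, ← Nat.cast_choose_two]

/-- For every integer `k ≥ 3` and every `ε > 0` there exists `n₀` such that every graph `G` on
`n ≥ n₀` vertices with minimum degree at least `(1 - 1/(9k^10))·(n-1)` has a `K_k`-packing
(a set of pairwise edge-disjoint copies of `K_k`) of size at least `(1-ε)·e(G)/C(k,2)`. -/
theorem kk_packing_of_min_degree (k : ℕ) (hk : 3 ≤ k) (ε : ℝ) (hε : 0 < ε) :
    ∃ n₀ : ℕ, ∀ n : ℕ, n₀ ≤ n → ∀ G : SimpleGraph (Fin n),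
      (∀ v, ((1 : ℝ) - 1 / (9 * (k : ℝ) ^ 10)) * ((n : ℝ) - 1) ≤ ((G.neighborSet v).ncard : ℝ)) →
      ∃ P : Finset G.Subgraph,
        (∀ c ∈ P, c.IsCopy (⊤ : SimpleGraph (Fin k))) ∧
        (P : Set G.Subgraph).Pairwise (fun c d => Disjoint c.edgeSet d.edgeSet) ∧
        (1 - ε) * ((G.edgeSet.ncard : ℝ) / ((k : ℝ) * ((k : ℝ) - 1) / 2)) ≤ (P.card : ℝ) := by
  obtain ⟨n₀, h⟩ := kk_packing_of_min_degree_general k (by omega) ε hε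
  refine ⟨n₀, fun n hn G hdeg => h (Fin n) G (by rwa [Fintype.card_fin]) fun v => ?_⟩
  rw [Fintype.card_fin]
  refine le_trans ?_ (hdeg v)
  have hn : (0 : ℝ) ≤ n - 1 := sub_nonneg.mpr (by exact_mod_cast v.pos)
  have hk' : (1 : ℝ) ≤ k := by exact_mod_cast (by omega : 1 ≤ k)
  gcongr <;> norm_num
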